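/- Let n ≥ 2 and a = (a_1,…,a_n) ∈ ℂ^n with each a_j purely imaginary, let σ ∈ ℂ with Re(σ) > 0, and let p_1,…,p_{n−1} ∈ ℂ with Re(p_j) > 0 for all j; set p_0 := 0. Then U_{n,a}(p_1,…,p_{n−1}) = [Γ_ℝ(p_{n−1}+σ+|a|) / ∏_{j=1}^{n} Γ_ℝ(σ+a_j)] · (1/(4πi)^{n−1})·∫_{q_1,…,q_{n−1}} U_{n,a}(q_1,…,q_{n−1})·∏_{j=1}^{n−1} Γ_ℝ(p_j−q_j)·Γ_ℝ(p_{j−1}−q_j+σ) dq_1⋯dq_{n−1}. -/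

import Mathlib

open MeasureTheory Complex

noncomputable section

/-- `Γ_ℝ(s) = π^{-s/2} Γ(s/2)`. -/
def GammaR (s : ℂ) : ℂ := (Real.pi : ℂ) ^ (-s / 2) * Complex.Gamma (s / 2)

/-- Modified Bessel function of the second kind, via its integral representation. -/
def BesselK (ν : ℂ) (y : ℝ) : ℂ :=
  (1 / 2) * ∫ t in Set.Ioi (0 : ℝ),
    Complex.exp (-((y : ℂ) / 2) * ((t : ℂ) + 1 / (t : ℂ))) * (t : ℂ) ^ ν / (t : ℂ)

/-- Extend a finite real tuple to `ℕ`, defaulting to `1`. -/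
def extR {k : ℕ} (t : Fin k → ℝ) : ℕ → ℝ := fun i => if h : i < k then t ⟨i, h⟩ else 1

/-- Extend a finite real tuple to `ℕ`, defaulting to `0`. -/
def extR0 {k : ℕ} (t : Fin k → ℝ) : ℕ → ℝ := fun i => if h : i < k then t ⟨i, h⟩ else 0

/-- The positive orthant. -/
def posSet (k : ℕ) : Set (Fin k → ℝ) := {t | ∀ j, 0 < t j}

/-- `|a| = a_1 + ⋯ + a_n` (0-based indexing). -/
def sumA (n : ℕ) (a : ℕ → ℂ) : ℂ := ∑ j ∈ Finset.range n, a j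

/-- `ã_j = a_{j+1} + a_1/(n-1)` (0-based indexing). -/
def tildeA (n : ℕ) (a : ℕ → ℂ) : ℕ → ℂ := fun j => a (j + 1) + a 0 / ((n : ℂ) - 1)

/-- The normalized radial part `Ŵ^A_{n,a}` of the class one `GL_n(ℝ)` Whittaker function,
as a function of `(y_1,…,y_{n-1})` (0-based indexing). -/
def WhittAr : ℕ → (ℕ → ℂ) → (ℕ → ℝ) → ℂ
  | 0, _, _ => 1
  | 1, _, _ => 1
  | 2, a, y => 2 * ((y 0 : ℂ) ^ ((a 0 + a 1) / 2)) *
      BesselK ((a 0 - a 1) / 2) (2 * Real.pi * y 0)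
  | (n + 3), a, y =>
      ∫ t in posSet (n + 2),
        WhittAr (n + 2) (tildeA (n + 3) a)
            (fun j => y (j + 1) * Real.sqrt (extR t (j + 1) / extR t j)) *
          (∏ j ∈ Finset.range (n + 2),
            Complex.exp (((-(Real.pi * y j) ^ 2 * extR t j - 1 / extR t j : ℝ) : ℂ)) *
              ((Real.pi * y j : ℝ) : ℂ) ^ ((((n + 2 - j : ℕ) : ℂ) * a 0) / ((n + 2 : ℕ) : ℂ)) *
              ((extR t j : ℝ) : ℂ) ^ ((((n + 3 : ℕ) : ℂ) * a 0) / (2 * ((n + 2 : ℕ) : ℂ)))) *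
          ((Real.pi * extR t (n + 1) : ℝ) : ℂ) ^ (-(sumA (n + 3) a) / 2) *
          (∏ j ∈ Finset.range (n + 2), ((extR t j : ℝ) : ℂ))⁻¹

/-- `Ŵ^A_{n,a}` as a function of the full tuple `(y_1,…,y_n)`. -/
def WhittAhat (n : ℕ) (a : ℕ → ℂ) (y : ℕ → ℝ) : ℂ :=
  ((y (n - 1) : ℝ) : ℂ) ^ sumA n a * WhittAr n a y

/-- The Mellin transform `U_{n,a}` (0-based: `s j` stands for `s_{j+1}`). -/
def Ufun (n : ℕ) (a : ℕ → ℂ) (s : ℕ → ℂ) : ℂ :=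
  ∫ y in posSet (n - 1),
    WhittAr n a (extR y) *
      ∏ j ∈ Finset.range (n - 1), ((extR y j : ℝ) : ℂ) ^ s j / ((extR y j : ℝ) : ℂ)

/-- The normalized radial part `Ŵ^B_{n,b}` of the class one `SO_{2n+1}(ℝ)` Whittaker function. -/
def WhittBr : ℕ → (ℕ → ℂ) → (ℕ → ℝ) → ℂ
  | 0, _, _ => 1
  | 1, b, y => 2 * BesselK (b 0 / 2) (2 * Real.pi * y 0)
  | (n + 2), b, y =>
      ∫ p in (posSet (n + 2) ×ˢ posSet (n + 1)),
        WhittBr (n + 1) b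
            (fun j =>
              if j < n then
                y (j + 1) *
                  Real.sqrt (extR p.1 (j + 1) * extR p.2 (j + 1) /
                    (extR p.1 (j + 2) * extR p.2 j))
              else y (n + 1) * Real.sqrt (extR p.1 (n + 1) / extR p.2 n)) *
          (∏ j ∈ Finset.range (n + 2),
            Complex.exp (((-(Real.pi * y j) ^ 2 * extR p.1 j - 1 / extR p.1 j : ℝ) : ℂ)) *
              ((Real.pi * y j : ℝ) : ℂ) ^ b (n + 1)) *
          (∏ j ∈ Finset.range (n + 1),
            Complex.exp (((-(Real.pi * y j) ^ 2 * (extR p.1 j / extR p.1 (j + 1)) * extR p.2 j -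
                  1 / extR p.2 j : ℝ) : ℂ)) *
              ((extR p.1 (j + 1) * extR p.2 j : ℝ) : ℂ) ^ (b (n + 1) / 2)) *
          ((extR p.1 0 : ℝ) : ℂ) ^ b (n + 1) *
          (∏ j ∈ Finset.range (n + 1), ((extR p.2 j : ℝ) : ℂ))⁻¹ *
          (∏ j ∈ Finset.range (n + 2), ((extR p.1 j : ℝ) : ℂ))⁻¹

/-- The Mellin transform `V_{n,b}` (0-based: `s j` stands for `s_{j+1}`). -/
def Vfun (n : ℕ) (b : ℕ → ℂ) (s : ℕ → ℂ) : ℂ :=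
  ∫ y in posSet n,
    WhittBr n b (extR y) *
      ∏ j ∈ Finset.range n, ((extR y j : ℝ) : ℂ) ^ s j / ((extR y j : ℝ) : ℂ)

/-- Integral over the vertical line `Re z = c`, i.e. `i·∫_ℝ f(c+it) dt`. -/
def VInt (c : ℝ) (f : ℂ → ℂ) : ℂ := Complex.I * ∫ t : ℝ, f (c + t * Complex.I)

/-- Iterated integral over `k` vertical lines with abscissas `c 0, …, c (k-1)`;
the integrand is fed the contour points as a 0-based sequence. -/
def VIntK (k : ℕ) (c : ℕ → ℝ) (f : (ℕ → ℂ) → ℂ) : ℂ :=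
  Complex.I ^ k * ∫ t : Fin k → ℝ, f (fun i => (c i : ℂ) + (extR0 t i : ℝ) * Complex.I)



/-- The extension of `p_1,…,p_{n-1}` by the convention `p_0 = 0` (1-based indexing). -/
def Pext (p : ℕ → ℂ) : ℕ → ℂ := fun i => if i = 0 then 0 else p (i - 1)

/-- The Gaussian `exp(-π y²)` in the logarithmic coordinate `y = e^x`. -/
def gaussExp (x : ℝ) : ℝ := Real.exp (-(Real.pi * Real.exp (2 * x)))

/-- The twist `e^{s x} exp(-π e^{2x})`. -/
def gaussTwist (s : ℂ) (x : ℝ) : ℂ := (gaussExp x : ℂ) * cexp (s * x)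

lemma gaussExp_pos (x : ℝ) : 0 < gaussExp x := Real.exp_pos _

lemma continuous_gaussExp : Continuous gaussExp := by
  unfold gaussExp; fun_prop

lemma continuous_gaussTwist (s : ℂ) : Continuous (gaussTwist s) := by
  unfold gaussTwist
  have := continuous_gaussExp
  fun_prop

lemma gaussTwist_mul_cexp (s t : ℂ) (x : ℝ) :
    gaussTwist s x * cexp (t * x) = gaussTwist (s + t) x := by
  simp only [gaussTwist, add_mul, Complex.exp_add]; ring

lemma norm_gaussTwist (s : ℂ) (x : ℝ) : ‖gaussTwist s x‖ = ‖gaussTwist s.re x‖ := by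
  simp [gaussTwist, Complex.norm_exp]

lemma integral_Ioi_eq_integral_exp (F : ℝ → ℂ) :
    ∫ t in Set.Ioi (0 : ℝ), F t = ∫ x : ℝ, Real.exp x • F (Real.exp x) := by
  have h := integral_image_eq_integral_abs_deriv_smul (s := Set.univ) (f := Real.exp)
    (f' := Real.exp) MeasurableSet.univ (fun x _ => (Real.hasDerivAt_exp x).hasDerivWithinAt)
    Real.exp_injective.injOn F
  simpa [Set.image_univ, Real.range_exp] using h

lemma integrableOn_Ioi_iff_integrable_exp (F : ℝ → ℂ) :
    IntegrableOn F (Set.Ioi (0 : ℝ)) ↔ Integrable fun x : ℝ => Real.exp x • F (Real.exp x) := by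
  have h := integrableOn_image_iff_integrableOn_abs_deriv_smul (s := Set.univ) (f := Real.exp)
    (f' := Real.exp) MeasurableSet.univ (fun x _ => (Real.hasDerivAt_exp x).hasDerivWithinAt)
    Real.exp_injective.injOn F
  simpa [Set.image_univ, Real.range_exp] using h

lemma exp_smul_gammaIntegrand (s : ℂ) (x : ℝ) :
    Real.exp x • ((Real.exp (-Real.exp x) : ℂ) * (Real.exp x : ℂ) ^ (s - 1)) =
      cexp (-cexp x + s * x) := by
  rw [Complex.real_smul, Complex.cpow_def_of_ne_zero (by exact_mod_cast (Real.exp_pos x).ne'),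
    ← Complex.ofReal_log (Real.exp_pos x).le, Real.log_exp]
  push_cast
  rw [← Complex.exp_add, ← Complex.exp_add]
  congr 1; ring

lemma integrable_exp_neg_exp {s : ℂ} (hs : 0 < s.re) :
    Integrable fun x : ℝ => cexp (-cexp x + s * x) := by
  have h := (integrableOn_Ioi_iff_integrable_exp _).1 (Complex.GammaIntegral_convergent hs)
  simpa only [exp_smul_gammaIntegrand] using h

lemma integral_exp_neg_exp {s : ℂ} (hs : 0 < s.re) :
    ∫ x : ℝ, cexp (-cexp x + s * x) = Complex.Gamma s := by
  rw [Complex.Gamma_eq_integral hs, Complex.GammaIntegral, integral_Ioi_eq_integral_exp]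
  simp only [exp_smul_gammaIntegrand]

lemma gaussTwist_eq (s : ℂ) (x : ℝ) :
    gaussTwist s x = cexp (-s / 2 * Real.log Real.pi) *
      cexp (-cexp ((2 * x + Real.log Real.pi : ℝ)) + s / 2 * ((2 * x + Real.log Real.pi : ℝ))) := by
  have h : cexp ((2 * x + Real.log Real.pi : ℝ)) = Real.pi * cexp (2 * x) := by
    rw [← Complex.ofReal_exp, Real.exp_add, Real.exp_log Real.pi_pos]; push_cast; ring
  rw [h, ← Complex.exp_add, gaussTwist, gaussExp]
  push_cast
  rw [← Complex.exp_add]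
  congr 1; ring

lemma integrable_gaussTwist {s : ℂ} (hs : 0 < s.re) : Integrable (gaussTwist s) := by
  have h := ((integrable_exp_neg_exp (s := s / 2) (by simpa using hs)).comp_add_right
    (Real.log Real.pi)).comp_mul_left' (two_ne_zero)
  have h2 := h.const_mul (cexp (-s / 2 * Real.log Real.pi))
  refine h2.congr (Filter.Eventually.of_forall fun x => ?_)
  simp only [gaussTwist_eq]

lemma integral_gaussTwist {s : ℂ} (hs : 0 < s.re) : ∫ x, gaussTwist s x = GammaR s / 2 := by
  simp only [gaussTwist_eq]
  rw [integral_const_mul,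
    Measure.integral_comp_mul_left (fun y : ℝ => cexp (-cexp ((y + Real.log Real.pi : ℝ)) +
      s / 2 * ((y + Real.log Real.pi : ℝ)))) 2,
    integral_add_right_eq_self (fun y : ℝ => cexp (-cexp (y : ℂ) + s / 2 * (y : ℂ))),
    integral_exp_neg_exp (by simpa using hs), GammaR,
    Complex.cpow_def_of_ne_zero (by exact_mod_cast Real.pi_pos.ne'),
    ← Complex.ofReal_log Real.pi_pos.le]
  rw [abs_of_pos (by norm_num), Complex.real_smul]
  push_cast
  rw [mul_comm (-s / 2)]
  ring

lemma norm_GammaR_le {s : ℂ} (hs : 0 < s.re) : ‖GammaR s‖ ≤ ‖GammaR s.re‖ := by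
  have h1 : (0:ℝ) < ((s.re : ℂ)).re := by simpa using hs
  have e1 : GammaR s = 2 * ∫ x, gaussTwist s x := by rw [integral_gaussTwist hs]; ring
  have e2 : GammaR s.re = ((2 * ∫ x, ‖gaussTwist s.re x‖ : ℝ) : ℂ) := by
    rw [show GammaR s.re = 2 * ∫ x, gaussTwist s.re x by rw [integral_gaussTwist h1]; ring]
    push_cast
    rw [← integral_complex_ofReal]
    congr 2; ext x
    have hp := gaussExp_pos x
    simp [gaussTwist, Complex.norm_exp, abs_of_pos hp]
  rw [e2, e1, norm_mul, Complex.norm_real, Real.norm_of_nonneg (by positivity)]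
  simp only [Complex.norm_ofNat]
  gcongr
  refine (norm_integral_le_integral_norm _).trans (le_of_eq ?_)
  congr 1; ext x; rw [norm_gaussTwist]

lemma GammaR_ne_zero {s : ℂ} (hs : 0 < s.re) : GammaR s ≠ 0 := Complex.Gammaℝ_ne_zero_of_re_pos hs

lemma continuousAt_GammaR {s : ℂ} (hs : 0 < s.re) : ContinuousAt GammaR s := by
  have := (differentiable_Gammaℝ_inv.continuous.continuousAt (x := s)).inv₀
    (inv_ne_zero (Complex.Gammaℝ_ne_zero_of_re_pos hs))
  have e : GammaR = (fun s => (Complex.Gammaℝ s)⁻¹)⁻¹ := by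
    ext z; exact (inv_inv (Complex.Gammaℝ z)).symm
  rwa [e]

lemma continuous_GammaR_comp {X : Type*} [TopologicalSpace X] {f : X → ℂ} (hf : Continuous f)
    (h : ∀ x, 0 < (f x).re) : Continuous fun x => GammaR (f x) :=
  continuous_iff_continuousAt.2 fun x => (continuousAt_GammaR (h x)).comp hf.continuousAt

lemma integrable_inv_const_add_sq {d : ℝ} (hd : 0 < d) :
    Integrable fun t : ℝ => (d ^ 2 + t ^ 2)⁻¹ := by
  have h := (integrable_inv_one_add_sq.comp_div hd.ne').const_mul (d ^ 2)⁻¹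
  refine h.congr (Filter.Eventually.of_forall fun t => ?_)
  simp only
  rw [← mul_inv]; congr 1; field_simp

lemma integrable_GammaR_vertical {d : ℝ} (hd : 0 < d) :
    Integrable fun t : ℝ => GammaR (d + t * I) := by
  have hre : ∀ t : ℝ, 0 < ((d : ℂ) + t * I).re := fun t => by simpa using hd
  have hc : Continuous fun t : ℝ => GammaR (d + t * I) :=
    continuous_GammaR_comp (by fun_prop) hre
  refine ((integrable_inv_const_add_sq hd).const_mul
    (‖GammaR ((d + 4 : ℝ) : ℂ)‖ * (2 * Real.pi) ^ 2)).mono' hc.aestronglyMeasurable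
    (Filter.Eventually.of_forall fun t => ?_)
  set s : ℂ := d + t * I with hs
  have hsre : s.re = d := by simp [hs]
  have hs0 : s ≠ 0 := fun h => by rw [h] at hsre; simp at hsre; linarith
  have hs2 : s + 2 ≠ 0 := fun h => by
    have : (s + 2).re = d + 2 := by simp [hsre]
    rw [h] at this; simp at this; linarith
  have e : GammaR (s + 4) = GammaR s * s / 2 / Real.pi * (s + 2) / 2 / Real.pi := by
    have h1 : GammaR (s + 2) = GammaR s * s / 2 / Real.pi := Complex.Gammaℝ_add_two hs0
    have h2 : GammaR (s + 2 + 2) = GammaR (s + 2) * (s + 2) / 2 / Real.pi :=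
      Complex.Gammaℝ_add_two hs2
    rw [← h1, ← h2]; congr 1; ring
  have hn : ‖GammaR (s + 4)‖ ≤ ‖GammaR ((d + 4 : ℝ) : ℂ)‖ := by
    have := norm_GammaR_le (s := s + 4) (by simp [hsre]; linarith)
    have h3 : (s + 4).re = d + 4 := by simp [hsre]
    rwa [h3] at this
  have hns : ‖s‖ ^ 2 = d ^ 2 + t ^ 2 := by
    rw [← Complex.normSq_eq_norm_sq]; simp [hs, Complex.normSq_apply]; ring
  have hns2 : ‖s‖ ≤ ‖s + 2‖ := by
    apply le_of_sq_le_sq _ (norm_nonneg _)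
    rw [hns, ← Complex.normSq_eq_norm_sq]
    simp [hs, Complex.normSq_apply]; nlinarith
  have hpos : 0 < d ^ 2 + t ^ 2 := by positivity
  have e' : ‖GammaR (s + 4)‖ * (2 * Real.pi) ^ 2 = ‖GammaR s‖ * (‖s‖ * ‖s + 2‖) := by
    rw [e]; simp [abs_of_pos Real.pi_pos]; field_simp
  rw [← div_eq_mul_inv, le_div_iff₀ hpos]
  calc ‖GammaR s‖ * (d ^ 2 + t ^ 2) = ‖GammaR s‖ * (‖s‖ * ‖s‖) := by rw [← hns, sq]
    _ ≤ ‖GammaR s‖ * (‖s‖ * ‖s + 2‖) := by gcongr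
    _ = ‖GammaR (s + 4)‖ * (2 * Real.pi) ^ 2 := e'.symm
    _ ≤ _ := by gcongr

lemma integrable_GammaR_sub (β : ℂ) {d : ℝ} (hd : d < β.re) :
    Integrable fun t : ℝ => GammaR (β - (d + t * I)) := by
  have h := (integrable_GammaR_vertical (sub_pos.2 hd)).comp_sub_left β.im
  refine h.congr (Filter.Eventually.of_forall fun t => ?_)
  simp only
  congr 1
  apply Complex.ext <;> simp

/-- Inversion of the two-sided Laplace transform. -/
lemma laplace_inversion {h : ℝ → ℂ} (hc : Continuous h) (c : ℝ)
    (hi : Integrable fun x : ℝ => h x * cexp (c * x))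
    (hL : Integrable fun t : ℝ => ∫ x : ℝ, h x * cexp ((c + t * I) * x)) (x : ℝ) :
    ∫ t : ℝ, (∫ y : ℝ, h y * cexp ((c + t * I) * y)) * cexp (-(c + t * I) * x) =
      2 * Real.pi * h x := by
  set L : ℝ → ℂ := fun t => ∫ y : ℝ, h y * cexp ((c + t * I) * y) with hLdef
  set g : ℝ → ℂ := fun x => h x * cexp (c * x) with hg
  have hgc : Continuous g := by fun_prop
  have hF : ∀ w : ℝ, FourierTransform.fourier g w = L (-(2 * Real.pi) * w) := by
    intro w
    rw [Real.fourier_eq', hLdef]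
    congr 1; ext y
    simp only [hg, smul_eq_mul]
    rw [← mul_assoc, mul_comm _ (h y), mul_assoc, ← Complex.exp_add]
    congr 2
    simp; ring
  have hFi : Integrable (FourierTransform.fourier g) := by
    have := hL.comp_mul_left' (R := -(2 * Real.pi)) (by simp [Real.pi_ne_zero])
    exact this.congr (Filter.Eventually.of_forall fun w => (hF w).symm)
  have hinv := congrFun (hgc.fourierInv_fourier_eq hi hFi) x
  rw [Real.fourierInv_eq'] at hinv
  have key : ∫ w : ℝ, cexp (↑(2 * Real.pi * inner ℝ w x) * I) • FourierTransform.fourier g w =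
      ∫ w : ℝ, (fun t : ℝ => cexp (-(t * I) * x) * L t) (-(2 * Real.pi) * w) := by
    congr 1; ext w
    rw [hF]; simp only [smul_eq_mul]
    congr 2
    simp; ring
  rw [key, Measure.integral_comp_mul_left (fun t : ℝ => cexp (-(t * I) * x) * L t)] at hinv
  have e : ∫ t : ℝ, L t * cexp (-(c + t * I) * x) =
      cexp (-(c * x)) * ∫ t : ℝ, cexp (-(t * I) * x) * L t := by
    rw [← integral_const_mul]
    congr 1; ext t
    rw [mul_comm, ← mul_assoc, ← Complex.exp_add]
    congr 2; ring
  rw [e]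
  have hpi : (Real.pi : ℂ) ≠ 0 := by exact_mod_cast Real.pi_ne_zero
  have hinv' : ∫ t : ℝ, cexp (-(t * I) * x) * L t = 2 * Real.pi * g x := by
    rw [← hinv, Complex.real_smul, inv_neg, abs_neg, abs_of_pos (by positivity)]
    generalize ∫ t : ℝ, cexp (-(t * I) * x) * L t = J
    push_cast
    field_simp
  rw [hinv', hg]
  simp only
  rw [show cexp (-(c * x)) * (2 * Real.pi * (h x * cexp (c * x))) =
    2 * Real.pi * h x * (cexp (-(c * x)) * cexp (c * x)) by ring, ← Complex.exp_add]
  simp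

/-- Inverse Laplace representation of the twisted Gaussian. -/
lemma gaussTwist_inversion (β : ℂ) {d : ℝ} (hd : d < β.re) (x : ℝ) :
    ∫ t : ℝ, GammaR (β - (d + t * I)) * cexp ((d + t * I) * x) =
      4 * Real.pi * gaussTwist β x := by
  have hpos : 0 < β.re - d := sub_pos.2 hd
  have hL : ∀ t : ℝ, ∫ y : ℝ, (gaussExp y : ℂ) * cexp (((β.re - d : ℝ) + t * I) * y) =
      GammaR ((β.re - d : ℝ) + t * I) / 2 := fun t =>
    integral_gaussTwist (by simpa using hpos)
  have h := laplace_inversion (h := fun x => (gaussExp x : ℂ))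
    (by have := continuous_gaussExp; fun_prop) (β.re - d)
    (integrable_gaussTwist (s := (β.re - d : ℝ)) (by simpa using hpos))
    (by simp only [hL]; exact (integrable_GammaR_vertical hpos).div_const 2) x
  simp only [hL] at h
  rw [← integral_sub_left_eq_self _ _ β.im] at h
  have e : ∀ t : ℝ, GammaR (β - (d + t * I)) * cexp ((d + t * I) * x) = 2 * cexp (β * x) *
      (GammaR ((β.re - d : ℝ) + ((β.im - t : ℝ) : ℂ) * I) / 2 *
        cexp (-((β.re - d : ℝ) + ((β.im - t : ℝ) : ℂ) * I) * x)) := by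
    intro t
    have e1 : ((β.re - d : ℝ) : ℂ) + ((β.im - t : ℝ) : ℂ) * I = β - (d + t * I) := by
      apply Complex.ext <;> simp
    rw [e1, show (d + t * I) * (x : ℂ) = β * x + -(β - (d + t * I)) * x by ring, Complex.exp_add]
    ring
  simp only [e]
  rw [integral_const_mul, h, gaussTwist]; ring

/-- `log √(1 + e^{2z})`. -/
def logSqrtOneAddExp (z : ℝ) : ℝ := Real.log (1 + Real.exp (2 * z)) / 2

lemma continuous_logSqrtOneAddExp : Continuous logSqrtOneAddExp := by
  unfold logSqrtOneAddExp
  exact (Continuous.log (by fun_prop) fun z => by positivity).div_const 2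

lemma logSqrtOneAddExp_neg (z : ℝ) : logSqrtOneAddExp (-z) = logSqrtOneAddExp z - z := by
  unfold logSqrtOneAddExp
  have h : 1 + Real.exp (2 * -z) = (1 + Real.exp (2 * z)) * Real.exp (-(2 * z)) := by
    rw [add_mul, ← Real.exp_add]; simp [mul_comm, add_comm]
  rw [h, Real.log_mul (by positivity) (by positivity), Real.log_exp]; ring

lemma gaussExp_add_mul_gaussExp (y z : ℝ) :
    gaussExp (z + y) * gaussExp y = gaussExp (y + logSqrtOneAddExp z) := by
  have h : Real.exp (2 * (y + logSqrtOneAddExp z)) =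
      Real.exp (2 * y) * (1 + Real.exp (2 * z)) := by
    rw [logSqrtOneAddExp, mul_add, Real.exp_add, mul_div_cancel₀ _ two_ne_zero,
      Real.exp_log (by positivity)]
  simp only [gaussExp]
  rw [← Real.exp_add, h, mul_add 2 z y, Real.exp_add (2 * z)]
  congr 1; ring

/-- Integrand of the Beta integral in logarithmic coordinates. -/
def betaKernel (u w : ℂ) (z : ℝ) : ℂ := cexp (u * z - w * logSqrtOneAddExp z)

lemma continuous_betaKernel (u w : ℂ) : Continuous (betaKernel u w) := by
  unfold betaKernel
  have := continuous_logSqrtOneAddExp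
  fun_prop

lemma gaussTwist_shear (u v : ℂ) (y z : ℝ) :
    gaussTwist u (z + y) * gaussTwist v y =
      betaKernel u (u + v) z * gaussTwist (u + v) (y + logSqrtOneAddExp z) := by
  have h := congrArg (fun r : ℝ => (r : ℂ)) (gaussExp_add_mul_gaussExp y z)
  simp only [Complex.ofReal_mul] at h
  simp only [gaussTwist, betaKernel]
  rw [mul_mul_mul_comm, h, mul_left_comm (cexp _), ← Complex.exp_add, ← Complex.exp_add]
  congr 2; push_cast; ring

lemma integrable_gaussTwist_shear {u v : ℂ} (hu : 0 < u.re) (hv : 0 < v.re) :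
    Integrable (fun p : ℝ × ℝ => gaussTwist u (p.2 + p.1) * gaussTwist v p.1)
      (volume.prod volume) := by
  have h := (integrable_gaussTwist hv).mul_prod (integrable_gaussTwist hu)
  have h2 := (measurePreserving_prod_add (volume : Measure ℝ) (volume : Measure ℝ)).integrable_comp_of_integrable h
  refine h2.congr (Filter.Eventually.of_forall fun p => ?_)
  simp [mul_comm, add_comm]

lemma integral_gaussTwist_shear {u v : ℂ} (hu : 0 < u.re) (hv : 0 < v.re) (z : ℝ) :
    ∫ y, gaussTwist u (z + y) * gaussTwist v y =
      betaKernel u (u + v) z * (GammaR (u + v) / 2) := by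
  simp only [gaussTwist_shear]
  rw [integral_const_mul, integral_add_right_eq_self (gaussTwist (u + v)),
    integral_gaussTwist (by simp; linarith)]

lemma integrable_betaKernel {u v : ℂ} (hu : 0 < u.re) (hv : 0 < v.re) :
    Integrable (betaKernel u (u + v)) := by
  have h := (integrable_gaussTwist_shear hu hv).integral_prod_right
  simp only [integral_gaussTwist_shear hu hv] at h
  have hne : GammaR (u + v) / 2 ≠ 0 := div_ne_zero (GammaR_ne_zero (by simp; linarith)) two_ne_zero
  exact (integrable_mul_const_iff hne.isUnit _).1 h

lemma integral_betaKernel {u v : ℂ} (hu : 0 < u.re) (hv : 0 < v.re) :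
    ∫ z, betaKernel u (u + v) z = GammaR u * GammaR v / (2 * GammaR (u + v)) := by
  have hne : GammaR (u + v) ≠ 0 := GammaR_ne_zero (by simp; linarith)
  have h := integral_integral_swap (f := fun y z => gaussTwist u (z + y) * gaussTwist v y)
    (integrable_gaussTwist_shear hu hv)
  simp only [integral_gaussTwist_shear hu hv] at h
  simp only [integral_mul_const] at h
  simp only [integral_add_right_eq_self (gaussTwist u)] at h
  rw [integral_const_mul, integral_gaussTwist hu, integral_gaussTwist hv] at h
  field_simp
  linear_combination (-4 : ℂ) * h

lemma betaKernel_mul_cexp (u w s : ℂ) (z : ℝ) :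
    betaKernel u w z * cexp (s * z) = betaKernel (u + s) w z := by
  simp only [betaKernel, ← Complex.exp_add]; congr 1; ring

lemma integrable_bddGammaR_mul {α δ : ℂ} {c : ℝ} (hα : 0 < α.re + c) (hδ : c < δ.re) :
    Integrable fun t : ℝ => GammaR (α + (c + t * I)) * GammaR (δ - (c + t * I)) := by
  refine (integrable_GammaR_sub δ hδ).bdd_mul (c := ‖GammaR ((α.re + c : ℝ) : ℂ)‖)
    (continuous_GammaR_comp (by fun_prop) fun t => by simpa using hα).aestronglyMeasurable
    (Filter.Eventually.of_forall fun t => ?_)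
  have := norm_GammaR_le (s := α + (c + t * I)) (by simpa using hα)
  simpa using this

/-- Barnes' first lemma for `GammaR`. -/
lemma barnes_first_lemma {α β γ δ : ℂ} {c : ℝ} (hα : 0 < α.re + c) (hβ : 0 < β.re + c)
    (hγ : c < γ.re) (hδ : c < δ.re) :
    ∫ t : ℝ, GammaR (α + (c + t * I)) * GammaR (β + (c + t * I)) *
        (GammaR (γ - (c + t * I)) * GammaR (δ - (c + t * I))) =
      4 * Real.pi * (GammaR (α + γ) * GammaR (α + δ) * GammaR (β + γ) * GammaR (β + δ) /
        GammaR (α + β + γ + δ)) := by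
  have hαδ : GammaR (α + δ) ≠ 0 := GammaR_ne_zero (by simp; linarith)
  have hβγ : GammaR (β + γ) ≠ 0 := GammaR_ne_zero (by simp; linarith)
  have hL : ∀ t : ℝ, ∫ y : ℝ, betaKernel α (α + δ) y * cexp ((c + t * I) * y) =
      GammaR (α + (c + t * I)) * GammaR (δ - (c + t * I)) / (2 * GammaR (α + δ)) := by
    intro t
    simp only [betaKernel_mul_cexp]
    have h := integral_betaKernel (u := α + (c + t * I)) (v := δ - (c + t * I))
      (by simpa using hα) (by simpa using hδ)
    rwa [show α + (c + t * I) + (δ - (c + t * I)) = α + δ by ring] at h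
  have hL' : ∀ t : ℝ, GammaR (β + (c + t * I)) * GammaR (γ - (c + t * I)) =
      2 * GammaR (β + γ) * ∫ y : ℝ, betaKernel β (β + γ) y * cexp ((c + t * I) * y) := by
    intro t
    simp only [betaKernel_mul_cexp]
    have h := integral_betaKernel (u := β + (c + t * I)) (v := γ - (c + t * I))
      (by simpa using hβ) (by simpa using hγ)
    rw [show β + (c + t * I) + (γ - (c + t * I)) = β + γ by ring] at h
    rw [h]; field_simp
  have hint : ∀ {u v : ℂ}, 0 < u.re + c → c < v.re →
      Integrable fun y : ℝ => betaKernel u (u + v) y * cexp (c * y) := by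
    intro u v hu hv
    simp only [betaKernel_mul_cexp]
    have h := integrable_betaKernel (u := u + c) (v := v - c) (by simpa using hu) (by simpa using hv)
    rwa [show u + c + (v - c) = u + v by ring] at h
  have hG := integrable_bddGammaR_mul hα hδ
  have hinv : ∀ x : ℝ, ∫ t : ℝ, GammaR (α + (c + t * I)) * GammaR (δ - (c + t * I)) *
      cexp ((c + t * I) * x) =
      4 * Real.pi * GammaR (α + δ) * betaKernel (δ) (α + δ) x := by
    intro x
    have h := laplace_inversion (continuous_betaKernel α (α + δ)) c (hint hα hδ)
      (by simp only [hL]; exact hG.div_const _) (-x)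
    simp only [hL] at h
    have e : betaKernel α (α + δ) (-x) = betaKernel δ (α + δ) x := by
      simp only [betaKernel, logSqrtOneAddExp_neg]; congr 1; push_cast; ring
    rw [e] at h
    calc _ = ∫ t : ℝ, (2 * GammaR (α + δ)) * (GammaR (α + (c + t * I)) *
          GammaR (δ - (c + t * I)) / (2 * GammaR (α + δ)) *
            cexp (-(c + t * I) * ((-x : ℝ) : ℂ))) := by
          congr 1; ext t
          push_cast; rw [neg_mul_neg]; field_simp
      _ = _ := by rw [integral_const_mul, h]; ring
  have hF : Integrable (fun p : ℝ × ℝ => (GammaR (α + (c + p.1 * I)) * GammaR (δ - (c + p.1 * I))) *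
      (betaKernel β (β + γ) p.2 * cexp ((c + p.1 * I) * p.2))) (volume.prod volume) := by
    have h1 := hG.mul_prod (hint hβ hγ)
    have h2 := h1.bdd_mul (f := fun p : ℝ × ℝ => cexp (p.1 * I * p.2)) (c := 1)
      (by fun_prop) (Filter.Eventually.of_forall fun p => by simp [Complex.norm_exp])
    refine h2.congr (Filter.Eventually.of_forall fun p => ?_)
    simp only
    rw [add_mul, Complex.exp_add]; ring
  have hs := integral_integral_swap (f := fun (t y : ℝ) => (GammaR (α + (c + t * I)) *
    GammaR (δ - (c + t * I))) * (betaKernel β (β + γ) y * cexp ((c + t * I) * y))) hF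
  have hβδ : 0 < (β + δ).re := by simp; linarith
  have hαγ : 0 < (α + γ).re := by simp; linarith
  calc _ = 2 * GammaR (β + γ) * ∫ t : ℝ, ∫ y : ℝ, (GammaR (α + (c + t * I)) *
        GammaR (δ - (c + t * I))) * (betaKernel β (β + γ) y * cexp ((c + t * I) * y)) := by
        rw [← integral_const_mul]
        congr 1; ext t
        rw [integral_const_mul]
        linear_combination (GammaR (α + (c + t * I)) * GammaR (δ - (c + t * I))) * hL' t
    _ = 2 * GammaR (β + γ) * ∫ y : ℝ, 4 * Real.pi * GammaR (α + δ) *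
          betaKernel (β + δ) (β + δ + (α + γ)) y := by
        rw [hs]
        congr 2; ext y
        have e : ∀ t : ℝ, (GammaR (α + (c + t * I)) * GammaR (δ - (c + t * I))) *
            (betaKernel β (β + γ) y * cexp ((c + t * I) * y)) = betaKernel β (β + γ) y *
            (GammaR (α + (c + t * I)) * GammaR (δ - (c + t * I)) * cexp ((c + t * I) * y)) :=
          fun t => by ring
        simp only [e]
        rw [integral_const_mul, hinv]
        have e2 : betaKernel β (β + γ) y * betaKernel δ (α + δ) y =
            betaKernel (β + δ) (β + δ + (α + γ)) y := by
          simp only [betaKernel, ← Complex.exp_add]; congr 1; ring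
        rw [← e2]; ring
    _ = _ := by
        rw [integral_const_mul, integral_betaKernel hβδ hαγ,
          show β + δ + (α + γ) = α + β + γ + δ by ring]
        field_simp

lemma norm_gaussTwist_le {s : ℂ} (hs : 0 < s.re) (x : ℝ) :
    ‖gaussTwist s x‖ ≤ Real.exp (s.re ^ 2) := by
  rw [gaussTwist, norm_mul, Complex.norm_exp, Complex.norm_real,
    Real.norm_of_nonneg (gaussExp_pos x).le, gaussExp, ← Real.exp_add, Real.exp_le_exp]
  have h1 : (s * x).re = s.re * x := by simp
  rw [h1]
  have h2 := Real.exp_pos (2 * x)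
  have h3 := Real.pi_gt_three
  rcases le_or_gt x 0 with hx | hx
  · nlinarith [sq_nonneg s.re]
  · have h4 : x ^ 2 ≤ Real.exp (2 * x) := by
      rw [two_mul, Real.exp_add]
      nlinarith [Real.add_one_le_exp x]
    nlinarith [sq_nonneg (s.re - x), sq_nonneg s.re]

lemma integral_pi_mul_removeNth {m : ℕ} (i : Fin (m + 1)) (φ : ℝ → ℂ) (ψ : (Fin m → ℝ) → ℂ) :
    ∫ v : Fin (m + 1) → ℝ, φ (v i) * ψ (fun j => v (i.succAbove j)) = (∫ x, φ x) * ∫ u, ψ u := by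
  rw [← integral_prod_mul, ← Measure.volume_eq_prod,
    ← (volume_preserving_piFinSuccAbove (fun _ => ℝ) i).integral_comp']
  rfl

lemma integrable_pi_mul_removeNth {m : ℕ} (i : Fin (m + 1)) {φ : ℝ → ℂ} {ψ : (Fin m → ℝ) → ℂ}
    (hφ : Integrable φ) (hψ : Integrable ψ) :
    Integrable fun v : Fin (m + 1) → ℝ => φ (v i) * ψ (fun j => v (i.succAbove j)) := by
  have h := hφ.mul_prod hψ
  rw [← Measure.volume_eq_prod] at h
  exact (volume_preserving_piFinSuccAbove (fun _ => ℝ) i).integrable_comp_of_integrable h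

/-- The exponential `e^{⟨s, x⟩}`. -/
def expSum {m : ℕ} (s : Fin m → ℂ) (x : Fin m → ℝ) : ℂ := cexp (∑ j, s j * x j)

lemma expSum_eq_prod {m : ℕ} (s : Fin m → ℂ) (x : Fin m → ℝ) :
    expSum s x = ∏ j, cexp (s j * x j) := Complex.exp_sum _ _

lemma expSum_add_right {m : ℕ} (s : Fin m → ℂ) (x y : Fin m → ℝ) :
    expSum s (x + y) = expSum s x * expSum s y := by
  simp only [expSum, ← Complex.exp_add, ← Finset.sum_add_distrib, Pi.add_apply]
  congr 1; refine Finset.sum_congr rfl fun j _ => ?_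
  push_cast; ring

lemma expSum_add_left {m : ℕ} (s t : Fin m → ℂ) (x : Fin m → ℝ) :
    expSum (s + t) x = expSum s x * expSum t x := by
  simp only [expSum, ← Complex.exp_add, ← Finset.sum_add_distrib, Pi.add_apply, add_mul]

lemma expSum_neg_mul {m : ℕ} (s : Fin m → ℂ) (x : Fin m → ℝ) :
    expSum (-s) x * expSum s x = 1 := by
  rw [← expSum_add_left]; simp [expSum]

lemma norm_expSum {m : ℕ} (s : Fin m → ℂ) (x : Fin m → ℝ) :
    ‖expSum s x‖ = Real.exp (∑ j, (s j).re * x j) := by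
  simp [expSum, Complex.norm_exp]

lemma continuous_expSum {m : ℕ} : Continuous fun p : (Fin m → ℂ) × (Fin m → ℝ) =>
    expSum p.1 p.2 := by
  unfold expSum; fun_prop

lemma continuous_expSum_comp {X : Type*} [TopologicalSpace X] {m : ℕ} {f : X → Fin m → ℂ}
    {g : X → Fin m → ℝ} (hf : Continuous f) (hg : Continuous g) :
    Continuous fun x => expSum (f x) (g x) :=
  continuous_expSum.comp (hf.prodMk hg)

/-- The point with real parts `d` and imaginary parts `ξ`. -/
def vertPt {m : ℕ} (d ξ : Fin m → ℝ) : Fin m → ℂ := fun j => d j + ξ j * I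

lemma continuous_vertPt {m : ℕ} (d : Fin m → ℝ) : Continuous (vertPt d) := by
  unfold vertPt; fun_prop

@[simp] lemma vertPt_re {m : ℕ} (d ξ : Fin m → ℝ) (j : Fin m) : (vertPt d ξ j).re = d j := by
  simp [vertPt]

lemma prod_gaussTwist_mul_expSum {m : ℕ} (α s : Fin m → ℂ) (x : Fin m → ℝ) :
    (∏ j, gaussTwist (α j) (x j)) * expSum s x = ∏ j, gaussTwist (α j + s j) (x j) := by
  rw [expSum_eq_prod, ← Finset.prod_mul_distrib]
  exact Finset.prod_congr rfl fun j _ => gaussTwist_mul_cexp _ _ _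

lemma continuous_prod_gaussTwist {m : ℕ} (α : Fin m → ℂ) :
    Continuous fun x : Fin m → ℝ => ∏ j, gaussTwist (α j) (x j) :=
  continuous_finsetProd _ fun j _ => (continuous_gaussTwist (α j)).comp (continuous_apply j)

lemma integrable_prod_gaussTwist {m : ℕ} {α : Fin m → ℂ} (hα : ∀ j, 0 < (α j).re) :
    Integrable fun x : Fin m → ℝ => ∏ j, gaussTwist (α j) (x j) :=
  Integrable.fintype_prod (f := fun j => gaussTwist (α j)) fun j => integrable_gaussTwist (hα j)

lemma norm_prod_gaussTwist_le {m : ℕ} {α : Fin m → ℂ} (hα : ∀ j, 0 < (α j).re) (x : Fin m → ℝ) :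
    ‖∏ j, gaussTwist (α j) (x j)‖ ≤ ∏ j, Real.exp ((α j).re ^ 2) := by
  rw [norm_prod]
  exact Finset.prod_le_prod (fun _ _ => norm_nonneg _) fun j _ => norm_gaussTwist_le (hα j) _

lemma integral_prod_gaussTwist {m : ℕ} {α : Fin m → ℂ} (hα : ∀ j, 0 < (α j).re) :
    ∫ x : Fin m → ℝ, ∏ j, gaussTwist (α j) (x j) = (∏ j, GammaR (α j)) / 2 ^ m := by
  rw [integral_fintype_prod_volume_eq_prod (fun j => gaussTwist (α j)),
    Finset.prod_congr rfl fun j _ => integral_gaussTwist (hα j), Finset.prod_div_distrib]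
  simp

lemma prod_gaussTwist_inversion {m : ℕ} {β : Fin m → ℂ} {d : Fin m → ℝ}
    (hd : ∀ j, d j < (β j).re) (x : Fin m → ℝ) :
    ∫ ξ : Fin m → ℝ, (∏ j, GammaR (β j - vertPt d ξ j)) * expSum (vertPt d ξ) x =
      (4 * Real.pi) ^ m * ∏ j, gaussTwist (β j) (x j) := by
  simp only [expSum_eq_prod, ← Finset.prod_mul_distrib, vertPt]
  rw [integral_fintype_prod_volume_eq_prod (fun j (t : ℝ) =>
    GammaR (β j - (d j + t * I)) * cexp ((d j + t * I) * x j)),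
    Finset.prod_congr rfl fun j _ => gaussTwist_inversion (β j) (hd j) (x j),
    Finset.prod_mul_distrib]
  simp

lemma integrable_prod_GammaR_sub {m : ℕ} {β : Fin m → ℂ} {d : Fin m → ℝ}
    (hd : ∀ j, d j < (β j).re) :
    Integrable fun ξ : Fin m → ℝ => ∏ j, GammaR (β j - vertPt d ξ j) :=
  Integrable.fintype_prod (f := fun j (t : ℝ) => GammaR (β j - (d j + t * I)))
    fun j => integrable_GammaR_sub (β j) (hd j)

section Shear

variable {m : ℕ} {f : (Fin m → ℝ) → ℂ} {d : Fin m → ℝ}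

/-- Two-sided Laplace transform on `ℝ^m`. -/
def laplacePi (f : (Fin m → ℝ) → ℂ) (s : Fin m → ℂ) : ℂ := ∫ x, f x * expSum s x

lemma norm_laplacePi_le {s : Fin m → ℂ} (hs : ∀ j, (s j).re = d j) :
    ‖laplacePi f s‖ ≤ ∫ x, ‖f x * expSum (fun j => (d j : ℂ)) x‖ := by
  refine (norm_integral_le_integral_norm _).trans (le_of_eq ?_)
  congr 1; ext x
  simp [norm_expSum, hs]

lemma stronglyMeasurable_laplacePi (hm : Measurable f) (d : Fin m → ℝ) :
    StronglyMeasurable fun ξ : Fin m → ℝ => laplacePi f (vertPt d ξ) := by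
  refine StronglyMeasurable.integral_prod_right' (f := fun p : (Fin m → ℝ) × (Fin m → ℝ) =>
    f p.2 * expSum (vertPt d p.1) p.2) ?_
  refine ((hm.comp measurable_snd).mul ?_).stronglyMeasurable
  exact (continuous_expSum_comp ((continuous_vertPt d).comp continuous_fst)
    continuous_snd).measurable

lemma integral_comp_add_mul_expSum (s : Fin m → ℂ) (u : Fin m → ℝ) :
    ∫ v, f (u + v) * expSum s v = expSum (-s) u * laplacePi f s := by
  rw [laplacePi, ← integral_add_left_eq_self (fun v => f v * expSum s v) u, ← integral_const_mul]
  congr 1; ext v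
  rw [expSum_add_right]
  linear_combination (-f (u + v) * expSum s v) * expSum_neg_mul s u

lemma integrable_comp_add_mul_expSum {s : Fin m → ℂ}
    (hf : Integrable fun x => f x * expSum s x) (u : Fin m → ℝ) :
    Integrable fun v => f (u + v) * expSum s v := by
  refine ((hf.comp_add_left u).const_mul (expSum (-s) u)).congr
    (Filter.Eventually.of_forall fun v => ?_)
  simp only
  rw [expSum_add_right]
  linear_combination (f (u + v) * expSum s v) * expSum_neg_mul s u

lemma expSum_vertPt (d ξ x : Fin m → ℝ) :
    expSum (vertPt d ξ) x = expSum (fun j => (d j : ℂ)) x * expSum (fun j => ξ j * I) x := by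
  rw [← expSum_add_left]; rfl

lemma norm_expSum_imag (ξ x : Fin m → ℝ) : ‖expSum (fun j => (ξ j : ℂ) * I) x‖ = 1 := by
  simp [norm_expSum]

/-- Mellin–Barnes form of the convolution of `f` against twisted Gaussians. -/
lemma integral_comp_add_mul_prod_gaussTwist
    (hf : Integrable fun x => f x * expSum (fun j => (d j : ℂ)) x) {β : Fin m → ℂ}
    (hβ : ∀ j, d j < (β j).re) (u : Fin m → ℝ) :
    (4 * Real.pi) ^ m * ∫ v, f (u + v) * ∏ j, gaussTwist (β j) (v j) =
      ∫ ξ, (∏ j, GammaR (β j - vertPt d ξ j)) * (expSum (-vertPt d ξ) u *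
        laplacePi f (vertPt d ξ)) := by
  have hF : Integrable (fun p : (Fin m → ℝ) × (Fin m → ℝ) => f (u + p.1) *
      ((∏ j, GammaR (β j - vertPt d p.2 j)) * expSum (vertPt d p.2) p.1))
      (volume.prod volume) := by
    have h1 := (integrable_comp_add_mul_expSum hf u).mul_prod (integrable_prod_GammaR_sub hβ)
    have h2 := h1.bdd_mul (f := fun p : (Fin m → ℝ) × (Fin m → ℝ) =>
      expSum (fun j => (p.2 j : ℂ) * I) p.1) (c := 1)
      (continuous_expSum_comp (by fun_prop) continuous_fst).aestronglyMeasurable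
      (Filter.Eventually.of_forall fun p => (norm_expSum_imag _ _).le)
    refine h2.congr (Filter.Eventually.of_forall fun p => ?_)
    simp only
    rw [expSum_vertPt]; ring
  calc _ = ∫ v, ∫ ξ, f (u + v) * ((∏ j, GammaR (β j - vertPt d ξ j)) * expSum (vertPt d ξ) v) := by
        rw [← integral_const_mul]
        congr 1; ext v
        rw [integral_const_mul, prod_gaussTwist_inversion hβ]; ring
    _ = ∫ ξ, ∫ v, f (u + v) * ((∏ j, GammaR (β j - vertPt d ξ j)) * expSum (vertPt d ξ) v) :=
        integral_integral_swap hF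
    _ = _ := by
        congr 1; ext ξ
        rw [← integral_comp_add_mul_expSum, ← integral_const_mul]
        congr 1; ext v; ring

lemma integral_integral_shear (hm : Measurable f)
    (hf : Integrable fun x => f x * expSum (fun j => (d j : ℂ)) x) {α β : Fin m → ℂ}
    (hα : ∀ j, d j < (α j).re) (hβ : ∀ j, d j < (β j).re) :
    (8 * Real.pi) ^ m * ∫ u : Fin m → ℝ, (∏ j, gaussTwist (α j) (u j)) *
        ∫ v, f (u + v) * ∏ j, gaussTwist (β j) (v j) =
      ∫ ξ, laplacePi f (vertPt d ξ) *
        ∏ j, (GammaR (α j - vertPt d ξ j) * GammaR (β j - vertPt d ξ j)) := by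
  have hα' : ∀ j, 0 < (α j + -(d j : ℂ)).re := fun j => by
    have := hα j; simp; linarith
  have hF : Integrable (fun p : (Fin m → ℝ) × (Fin m → ℝ) => (∏ j, gaussTwist (α j) (p.1 j)) *
      ((∏ j, GammaR (β j - vertPt d p.2 j)) * (expSum (-vertPt d p.2) p.1 *
        laplacePi f (vertPt d p.2)))) (volume.prod volume) := by
    have h1 := (integrable_prod_gaussTwist hα').mul_prod (integrable_prod_GammaR_sub hβ)
    have h2 := h1.bdd_mul (f := fun p : (Fin m → ℝ) × (Fin m → ℝ) =>
      expSum (fun j => ((-p.2) j : ℂ) * I) p.1 * laplacePi f (vertPt d p.2))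
      (c := 1 * ∫ x, ‖f x * expSum (fun j => (d j : ℂ)) x‖)
      ((continuous_expSum_comp (by fun_prop) continuous_fst).aestronglyMeasurable.mul
        ((stronglyMeasurable_laplacePi hm d).comp_measurable
          measurable_snd).aestronglyMeasurable)
      (Filter.Eventually.of_forall fun p => by
        rw [norm_mul]
        gcongr
        · exact (norm_expSum_imag _ _).le
        · exact norm_laplacePi_le (vertPt_re d p.2))
    refine h2.congr (Filter.Eventually.of_forall fun p => ?_)
    simp only
    rw [← prod_gaussTwist_mul_expSum α (fun j => -(d j : ℂ))]
    have e : expSum (-vertPt d p.2) p.1 = expSum (fun j => -(d j : ℂ)) p.1 *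
        expSum (fun j => ((-p.2) j : ℂ) * I) p.1 := by
      rw [← expSum_add_left]; congr 1; ext j; simp [vertPt]; ring
    rw [e]; ring
  calc _ = 2 ^ m * ∫ u : Fin m → ℝ, ∫ ξ : Fin m → ℝ, (∏ j, gaussTwist (α j) (u j)) *
      ((∏ j, GammaR (β j - vertPt d ξ j)) * (expSum (-vertPt d ξ) u *
        laplacePi f (vertPt d ξ))) := by
        rw [show (8 * Real.pi : ℂ) ^ m = 2 ^ m * (4 * Real.pi) ^ m by
          rw [← mul_pow]; congr 1; ring, mul_assoc, ← integral_const_mul]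
        congr 2; ext u
        rw [integral_const_mul, ← integral_comp_add_mul_prod_gaussTwist hf hβ]; ring
    _ = 2 ^ m * ∫ ξ : Fin m → ℝ, ∫ u : Fin m → ℝ, (∏ j, gaussTwist (α j) (u j)) *
      ((∏ j, GammaR (β j - vertPt d ξ j)) * (expSum (-vertPt d ξ) u *
        laplacePi f (vertPt d ξ))) := by rw [integral_integral_swap hF]
    _ = _ := by
        rw [← integral_const_mul]
        congr 1; ext ξ
        have e : ∀ u : Fin m → ℝ, (∏ j, gaussTwist (α j) (u j)) *
          ((∏ j, GammaR (β j - vertPt d ξ j)) * (expSum (-vertPt d ξ) u *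
            laplacePi f (vertPt d ξ))) = ((∏ j, GammaR (β j - vertPt d ξ j)) *
            laplacePi f (vertPt d ξ)) * ∏ j, gaussTwist (α j + (-vertPt d ξ) j) (u j) := by
          intro u; rw [← prod_gaussTwist_mul_expSum]; ring
        simp only [e]
        rw [integral_const_mul, integral_prod_gaussTwist fun j => by
          have := hα j; simp; linarith, Finset.prod_mul_distrib]
        simp only [Pi.neg_apply, ← sub_eq_add_neg]
        have : (2 : ℂ) ^ m ≠ 0 := pow_ne_zero _ two_ne_zero
        field_simp

variable {α β : Fin (m + 1) → ℂ}

lemma integrable_shear (hm : Measurable f)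
    (hf : Integrable fun x => f x * expSum (fun j => (d j : ℂ)) x)
    (hα : ∀ j : Fin m, d j < (α j.castSucc).re) (hα' : 0 < (α (Fin.last m)).re)
    (hβ : ∀ j : Fin m, d j < (β j.succ).re) (hβ' : 0 < (β 0).re) :
    Integrable (fun p : (Fin (m + 1) → ℝ) × (Fin (m + 1) → ℝ) =>
      f (fun j => p.1 j.castSucc + p.2 j.succ) *
        ((∏ j, gaussTwist (α j) (p.1 j)) * ∏ j, gaussTwist (β j) (p.2 j)))
      (volume.prod volume) := by
  set h : (Fin m → ℝ) → ℂ := fun x => f x * expSum (fun j => (d j : ℂ)) x with hh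
  have hhm : Measurable h :=
    hm.mul (continuous_expSum_comp continuous_const continuous_id).measurable
  set P : (Fin (m + 1) → ℝ) → ℂ := fun w => (∏ j : Fin m, gaussTwist
    (α j.castSucc + -(d j : ℂ)) (w j.castSucc)) * gaussTwist (α (Fin.last m)) (w (Fin.last m))
    with hP
  have hPc : Continuous P :=
    ((continuous_prod_gaussTwist fun j : Fin m => α j.castSucc + -(d j : ℂ)).comp
      (by fun_prop : Continuous fun w : Fin (m + 1) → ℝ => fun j : Fin m => w j.castSucc)).mul
      ((continuous_gaussTwist _).comp (continuous_apply _))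
  have hPi : Integrable P := by
    have h1 := integrable_pi_mul_removeNth (Fin.last m) (integrable_gaussTwist hα')
      (integrable_prod_gaussTwist (α := fun j : Fin m => α j.castSucc + -(d j : ℂ))
        fun j => by have := hα j; simp; linarith)
    refine h1.congr (Filter.Eventually.of_forall fun w => ?_)
    simp only [hP, Fin.succAbove_last]; ring
  have hβ0 := integrable_gaussTwist hβ'
  have key : Integrable (fun p : (Fin (m + 1) → ℝ) × (Fin (m + 1) → ℝ) =>
      P p.1 * (gaussTwist (β 0) (p.2 0) * h (fun j => p.1 j.castSucc + p.2 j.succ)))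
      (volume.prod volume) := by
    have hmeas : Measurable (fun p : (Fin (m + 1) → ℝ) × (Fin (m + 1) → ℝ) =>
        P p.1 * (gaussTwist (β 0) (p.2 0) * h (fun j => p.1 j.castSucc + p.2 j.succ))) := by
      refine (hPc.measurable.comp measurable_fst).mul (Measurable.mul ?_ (hhm.comp ?_))
      · exact ((continuous_gaussTwist _).comp (by fun_prop)).measurable
      · exact (by fun_prop : Continuous fun p : (Fin (m + 1) → ℝ) × (Fin (m + 1) → ℝ) =>
          fun j : Fin m => p.1 j.castSucc + p.2 j.succ).measurable
    refine (integrable_prod_iff hmeas.aestronglyMeasurable).2 ⟨?_, ?_⟩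
    · refine Filter.Eventually.of_forall fun w => ?_
      change Integrable fun v : Fin (m + 1) → ℝ =>
        P w * (gaussTwist (β 0) (v 0) * h (fun j => w j.castSucc + v j.succ))
      refine Integrable.const_mul ?_ _
      have h1 := integrable_pi_mul_removeNth 0 hβ0
        (hf.comp_add_left (fun j : Fin m => w j.castSucc))
      simp only [Fin.succAbove_zero] at h1
      exact h1
    · refine (hPi.norm.mul_const ((∫ x, ‖gaussTwist (β 0) x‖) * ∫ x, ‖h x‖)).congr
        (Filter.Eventually.of_forall fun w => ?_)
      simp only [norm_mul]
      rw [integral_const_mul]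
      congr 1
      have h1 := integral_pi_mul_removeNth 0 (fun x => (‖gaussTwist (β 0) x‖ : ℂ))
        (fun v : Fin m → ℝ => (‖h ((fun j : Fin m => w j.castSucc) + v)‖ : ℂ))
      simp only [integral_add_left_eq_self fun v : Fin m → ℝ => (‖h v‖ : ℂ)] at h1
      simp only [← Complex.ofReal_mul] at h1
      simp only [integral_complex_ofReal, ← Complex.ofReal_mul] at h1
      exact (Complex.ofReal_injective h1).symm
  have h2 := key.bdd_mul (f := fun p : (Fin (m + 1) → ℝ) × (Fin (m + 1) → ℝ) =>
    ∏ j : Fin m, gaussTwist (β j.succ + -(d j : ℂ)) (p.2 j.succ))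
    (c := ∏ j : Fin m, Real.exp ((β j.succ + -(d j : ℂ)).re ^ 2))
    ((continuous_prod_gaussTwist fun j : Fin m => β j.succ + -(d j : ℂ)).comp
      (by fun_prop : Continuous fun p : (Fin (m + 1) → ℝ) × (Fin (m + 1) → ℝ) =>
        fun j : Fin m => p.2 j.succ)).aestronglyMeasurable
    (Filter.Eventually.of_forall fun p => norm_prod_gaussTwist_le
      (fun j => by have := hβ j; simp; linarith) fun j : Fin m => p.2 j.succ)
  refine h2.congr (Filter.Eventually.of_forall fun p => ?_)
  have e1 := prod_gaussTwist_mul_expSum (fun j : Fin m => α j.castSucc) (fun j => -(d j : ℂ))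
    fun j => p.1 j.castSucc
  have e2 := prod_gaussTwist_mul_expSum (fun j : Fin m => β j.succ) (fun j => -(d j : ℂ))
    fun j => p.2 j.succ
  have e3 := expSum_add_right (fun j : Fin m => (d j : ℂ)) (fun j => p.1 j.castSucc)
    fun j => p.2 j.succ
  have e4 := expSum_neg_mul (fun j : Fin m => (d j : ℂ)) fun j => p.1 j.castSucc
  have e5 := expSum_neg_mul (fun j : Fin m => (d j : ℂ)) fun j => p.2 j.succ
  simp only [hP, hh]
  rw [Fin.prod_univ_castSucc (fun j => gaussTwist (α j) (p.1 j)),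
    Fin.prod_univ_succ (fun j => gaussTwist (β j) (p.2 j)), ← e1, ← e2]
  change _ = _
  rw [show (fun j : Fin m => p.1 j.castSucc + p.2 j.succ) =
    (fun j : Fin m => p.1 j.castSucc) + fun j : Fin m => p.2 j.succ from rfl, e3]
  rw [show (-fun j : Fin m => (d j : ℂ)) = fun j => -(d j : ℂ) from rfl] at e4 e5
  generalize expSum (fun j : Fin m => -(d j : ℂ)) (fun j : Fin m => p.1 j.castSucc) = A at *
  generalize expSum (fun j : Fin m => -(d j : ℂ)) (fun j : Fin m => p.2 j.succ) = B at *
  linear_combination (norm := ring_nf) (f ((fun j : Fin m => p.1 j.castSucc) + fun j : Fin m => p.2 j.succ) *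
    (∏ j : Fin m, gaussTwist (α j.castSucc) (p.1 j.castSucc)) *
    (gaussTwist (α (Fin.last m)) (p.1 (Fin.last m))) * gaussTwist (β 0) (p.2 0) *
    ∏ j : Fin m, gaussTwist (β j.succ) (p.2 j.succ)) * (e4 *
      (B * expSum (fun j : Fin m => (d j : ℂ)) fun j => p.2 j.succ) + e5)

/-- Mellin–Barnes form of the kernel integral appearing in the Whittaker recursion. -/
lemma integral_shear (hm : Measurable f)
    (hf : Integrable fun x => f x * expSum (fun j => (d j : ℂ)) x)
    (hα : ∀ j : Fin m, d j < (α j.castSucc).re) (hα' : 0 < (α (Fin.last m)).re)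
    (hβ : ∀ j : Fin m, d j < (β j.succ).re) (hβ' : 0 < (β 0).re) :
    (8 * Real.pi) ^ m * ∫ w : Fin (m + 1) → ℝ, ∫ v : Fin (m + 1) → ℝ,
        f (fun j => w j.castSucc + v j.succ) *
          ((∏ j, gaussTwist (α j) (w j)) * ∏ j, gaussTwist (β j) (v j)) =
      GammaR (β 0) * GammaR (α (Fin.last m)) / 4 * ∫ ξ, laplacePi f (vertPt d ξ) *
        ∏ j : Fin m, (GammaR (α j.castSucc - vertPt d ξ j) *
          GammaR (β j.succ - vertPt d ξ j)) := by
  rw [← integral_integral_shear hm hf hα hβ]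
  have e1 : ∀ w : Fin (m + 1) → ℝ, ∫ v : Fin (m + 1) → ℝ,
        f (fun j => w j.castSucc + v j.succ) *
          ((∏ j, gaussTwist (α j) (w j)) * ∏ j, gaussTwist (β j) (v j)) =
      GammaR (β 0) / 2 * (gaussTwist (α (Fin.last m)) (w (Fin.last m)) *
        ((∏ j : Fin m, gaussTwist (α j.castSucc) (w j.castSucc)) *
          ∫ v : Fin m → ℝ, f ((fun j : Fin m => w j.castSucc) + v) *
            ∏ j, gaussTwist (β j.succ) (v j))) := by
    intro w
    have h1 := integral_pi_mul_removeNth 0 (gaussTwist (β 0))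
        (fun v : Fin m → ℝ => f ((fun j : Fin m => w j.castSucc) + v) *
            ∏ j, gaussTwist (β j.succ) (v j))
    rw [integral_gaussTwist hβ'] at h1
    rw [show ∀ a b c d : ℂ, a * (b * (c * d)) = (b * c) * (a * d) by intros; ring, ← h1,
      ← integral_const_mul]
    congr 1; ext v
    rw [Fin.prod_univ_castSucc (fun j => gaussTwist (α j) (w j)),
      Fin.prod_univ_succ (fun j => gaussTwist (β j) (v j))]
    simp only [Fin.succAbove_zero]
    change f ((fun j : Fin m => w j.castSucc) + fun j : Fin m => v j.succ) * _ = _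
    ring
  simp only [e1]
  rw [integral_const_mul]
  have h2 := integral_pi_mul_removeNth (Fin.last m) (gaussTwist (α (Fin.last m)))
    (fun w : Fin m → ℝ => (∏ j : Fin m, gaussTwist (α j.castSucc) (w j)) *
          ∫ v : Fin m → ℝ, f (w + v) * ∏ j, gaussTwist (β j.succ) (v j))
  simp only [Fin.succAbove_last] at h2
  rw [h2, integral_gaussTwist hα']
  ring

end Shear

section ShearKernel

variable {m : ℕ} {f : (Fin m → ℝ) → ℂ} {d : Fin m → ℝ} {α β : Fin (m + 1) → ℂ}

/-- Integrand of the Whittaker recursion in logarithmic coordinates. -/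
def shearKernel (f : (Fin m → ℝ) → ℂ) (α β : Fin (m + 1) → ℂ) (w v : Fin (m + 1) → ℝ) : ℂ :=
  f (fun j => w j.castSucc + v j.succ) *
    ((∏ j, gaussTwist (α j) (w j)) * ∏ j, gaussTwist (β j) (v j))

lemma shearKernel_mul_expSum (s : Fin (m + 1) → ℂ) (w x : Fin (m + 1) → ℝ) :
    shearKernel f α β w (x - w) * expSum s x = shearKernel f (α + s) (β + s) w (x - w) := by
  have h : expSum s x = expSum s w * expSum s (x - w) := by
    rw [← expSum_add_right, add_sub_cancel]
  have e1 := prod_gaussTwist_mul_expSum α s w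
  have e2 := prod_gaussTwist_mul_expSum β s (x - w)
  simp only [shearKernel, Pi.add_apply]
  rw [← e1, ← e2, h]; ring

lemma measurable_shearKernel (hm : Measurable f) (α β : Fin (m + 1) → ℂ) :
    Measurable fun p : (Fin (m + 1) → ℝ) × (Fin (m + 1) → ℝ) =>
      shearKernel f α β p.1 p.2 := by
  unfold shearKernel
  refine (hm.comp ?_).mul (Measurable.mul ?_ ?_)
  · exact (by fun_prop : Continuous fun p : (Fin (m + 1) → ℝ) × (Fin (m + 1) → ℝ) =>
      fun j : Fin m => p.1 j.castSucc + p.2 j.succ).measurable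
  · exact (continuous_prod_gaussTwist α).measurable.comp measurable_fst
  · exact (continuous_prod_gaussTwist β).measurable.comp measurable_snd

lemma measurable_integral_shearKernel (hm : Measurable f) (α β : Fin (m + 1) → ℂ) :
    Measurable fun x => ∫ w, shearKernel f α β w (x - w) := by
  have h : Measurable fun p : (Fin (m + 1) → ℝ) × (Fin (m + 1) → ℝ) =>
      shearKernel f α β p.2 (p.1 - p.2) :=
    (measurable_shearKernel hm α β).comp
      (measurable_snd.prodMk (measurable_fst.sub measurable_snd))
  exact h.stronglyMeasurable.integral_prod_right'.measurable

lemma integrable_shearKernel_sub (hm : Measurable f)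
    (hf : Integrable fun x => f x * expSum (fun j => (d j : ℂ)) x)
    (hα : ∀ j : Fin m, d j < (α j.castSucc).re) (hα' : 0 < (α (Fin.last m)).re)
    (hβ : ∀ j : Fin m, d j < (β j.succ).re) (hβ' : 0 < (β 0).re) :
    Integrable (fun p : (Fin (m + 1) → ℝ) × (Fin (m + 1) → ℝ) =>
      shearKernel f α β p.2 (p.1 - p.2)) (volume.prod volume) := by
  have h := (measurePreserving_prod_neg_add (volume : Measure (Fin (m + 1) → ℝ))
    (volume : Measure (Fin (m + 1) → ℝ))).integrable_comp_of_integrable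
    (integrable_shear hm hf hα hα' hβ hβ')
  refine h.swap.congr (Filter.Eventually.of_forall fun p => ?_)
  simp only [Function.comp_apply, Prod.fst_swap, Prod.snd_swap, shearKernel]
  rw [show -p.2 + p.1 = p.1 - p.2 by abel]

variable {s : Fin (m + 1) → ℂ}

lemma integral_shearKernel_mul_expSum (x : Fin (m + 1) → ℝ) :
    (∫ w, shearKernel f α β w (x - w)) * expSum s x =
      ∫ w, shearKernel f (α + s) (β + s) w (x - w) := by
  rw [← integral_mul_const]
  simp only [shearKernel_mul_expSum]

lemma integrable_integral_shearKernel (hm : Measurable f)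
    (hf : Integrable fun x => f x * expSum (fun j => (d j : ℂ)) x)
    (hα : ∀ j : Fin m, d j < ((α + s) j.castSucc).re) (hα' : 0 < ((α + s) (Fin.last m)).re)
    (hβ : ∀ j : Fin m, d j < ((β + s) j.succ).re) (hβ' : 0 < ((β + s) 0).re) :
    Integrable fun x => (∫ w, shearKernel f α β w (x - w)) * expSum s x := by
  simp only [integral_shearKernel_mul_expSum]
  exact (integrable_shearKernel_sub hm hf hα hα' hβ hβ').integral_prod_left

lemma laplacePi_integral_shearKernel (hm : Measurable f)
    (hf : Integrable fun x => f x * expSum (fun j => (d j : ℂ)) x)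
    (hα : ∀ j : Fin m, d j < ((α + s) j.castSucc).re) (hα' : 0 < ((α + s) (Fin.last m)).re)
    (hβ : ∀ j : Fin m, d j < ((β + s) j.succ).re) (hβ' : 0 < ((β + s) 0).re) :
    (8 * Real.pi) ^ m * laplacePi (fun x => ∫ w, shearKernel f α β w (x - w)) s =
      GammaR ((β + s) 0) * GammaR ((α + s) (Fin.last m)) / 4 * ∫ ξ, laplacePi f (vertPt d ξ) *
        ∏ j : Fin m, (GammaR ((α + s) j.castSucc - vertPt d ξ j) *
          GammaR ((β + s) j.succ - vertPt d ξ j)) := by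
  rw [← integral_shear hm hf hα hα' hβ hβ', laplacePi]
  simp only [integral_shearKernel_mul_expSum]
  rw [integral_integral_swap (integrable_shearKernel_sub hm hf hα hα' hβ hβ')]
  congr 2; ext w
  exact integral_sub_right_eq_self (fun v => shearKernel f (α + s) (β + s) w v) w

end ShearKernel

/-- Exponents of the first Gaussian factor in the Whittaker recursion: zero except for the last. -/
def lastExp (m : ℕ) (b : ℂ) : Fin (m + 1) → ℂ := Fin.snoc (α := fun _ => ℂ) (fun _ => 0) b

@[simp] lemma lastExp_castSucc (m : ℕ) (b : ℂ) (j : Fin m) : lastExp m b j.castSucc = 0 := by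
  simp [lastExp]

@[simp] lemma lastExp_last (m : ℕ) (b : ℂ) : lastExp m b (Fin.last m) = b := by
  simp [lastExp]

/-- The class one `GL_{m+1}(ℝ)` Whittaker function in logarithmic coordinates. -/
def logWhitt : (m : ℕ) → (ℕ → ℂ) → (Fin m → ℝ) → ℂ
  | 0, _, _ => 1
  | m + 1, a, x => 2 ^ (m + 1) * ∫ w : Fin (m + 1) → ℝ,
      shearKernel (logWhitt m fun j => a (j + 1))
        (lastExp m (sumA (m + 1) fun j => a (j + 1))) (fun _ => a 0) w (x - w)

lemma measurable_logWhitt : ∀ (m : ℕ) (a : ℕ → ℂ), Measurable (logWhitt m a)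
  | 0, _ => measurable_const
  | m + 1, a => by
    simp only [funext (logWhitt.eq_2 a m)]
    exact (measurable_integral_shearKernel (measurable_logWhitt m _) _ _).const_mul _

lemma sumA_re {n : ℕ} {a : ℕ → ℂ} (ha : ∀ j < n, (a j).re = 0) : (sumA n a).re = 0 := by
  rw [sumA, Complex.re_sum]
  exact Finset.sum_eq_zero fun j hj => ha j (Finset.mem_range.1 hj)

/-- A constant positive abscissa below finitely many positive numbers. -/
lemma exists_pos_lt {m : ℕ} {s : Fin m → ℝ} (hs : ∀ j, 0 < s j) :
    ∃ ε : ℝ, 0 < ε ∧ ∀ j, ε < s j := by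
  have h := Filter.eventually_all.2 fun j => (eventually_lt_nhds (hs j)).filter_mono
    (nhdsWithin_le_nhds (s := Set.Ioi 0))
  obtain ⟨ε, h1, h2⟩ := (h.and self_mem_nhdsWithin).exists
  exact ⟨ε, h2, h1⟩

lemma integrable_logWhitt (m : ℕ) {a : ℕ → ℂ} (ha : ∀ j < m + 1, (a j).re = 0)
    {s : Fin m → ℂ} (hs : ∀ j, 0 < (s j).re) :
    Integrable fun x => logWhitt m a x * expSum s x := by
  induction m generalizing a with
  | zero =>
    have : (fun x => logWhitt 0 a x * expSum s x) = fun _ => expSum s 0 := by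
      ext x; simp [logWhitt, expSum]
    rw [this]
    rw [Measure.volume_pi_eq_dirac 0]
    exact integrable_dirac (by simp)
  | succ m ih =>
    obtain ⟨ε, hε, h⟩ := exists_pos_lt hs
    have ha' : ∀ j < m + 1, (a (j + 1)).re = 0 := fun j hj => ha _ (by omega)
    simp only [logWhitt, mul_assoc]
    refine Integrable.const_mul (integrable_integral_shearKernel (d := fun _ => ε)
      (measurable_logWhitt m _) (ih ha' fun j => by simpa using hε) ?_ ?_ ?_ ?_) _
    · intro j; simpa using h j.castSucc
    · simpa [sumA_re ha'] using hs (Fin.last m)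
    · intro j; simpa [ha 0] using h j.succ
    · simpa [ha 0] using hs 0

/-- Recursion for the Mellin transform of the Whittaker function. -/
lemma laplacePi_logWhitt_succ (m : ℕ) {a : ℕ → ℂ} (ha : ∀ j < m + 2, (a j).re = 0)
    {s : Fin (m + 1) → ℂ} {d : Fin m → ℝ} (hd : ∀ j, 0 < d j)
    (hs0 : 0 < (s 0).re) (hsl : 0 < (s (Fin.last m)).re)
    (hs : ∀ j : Fin m, d j < (s j.castSucc).re) (hs' : ∀ j : Fin m, d j < (s j.succ).re) :
    laplacePi (logWhitt (m + 1) a) s =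
      GammaR (a 0 + s 0) * GammaR (sumA (m + 1) (fun j => a (j + 1)) + s (Fin.last m)) / 2 *
        ((4 * Real.pi : ℂ) ^ m)⁻¹ * ∫ ξ, laplacePi (logWhitt m fun j => a (j + 1)) (vertPt d ξ) *
        ∏ j : Fin m, (GammaR (s j.castSucc - vertPt d ξ j) *
          GammaR (a 0 + s j.succ - vertPt d ξ j)) := by
  have ha' : ∀ j < m + 1, (a (j + 1)).re = 0 := fun j hj => ha _ (by omega)
  have h := laplacePi_integral_shearKernel (d := d) (s := s)
    (α := lastExp m (sumA (m + 1) fun j => a (j + 1))) (β := fun _ => a 0)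
    (measurable_logWhitt m fun j => a (j + 1))
    (integrable_logWhitt m ha' fun j => by simpa using hd j)
    (fun j => by simpa using hs j) (by simpa [sumA_re ha'] using hsl)
    (fun j => by simpa [ha 0] using hs' j) (by simpa [ha 0] using hs0)
  have e : laplacePi (logWhitt (m + 1) a) s = 2 ^ (m + 1) *
      laplacePi (fun x => ∫ w, shearKernel (logWhitt m fun j => a (j + 1))
        (lastExp m (sumA (m + 1) fun j => a (j + 1))) (fun _ => a 0) w (x - w)) s := by
    simp only [laplacePi, logWhitt, mul_assoc]
    rw [integral_const_mul]
  simp only [Pi.add_apply, lastExp_castSucc, lastExp_last, zero_add] at h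
  have hπ : (Real.pi : ℂ) ≠ 0 := by exact_mod_cast Real.pi_ne_zero
  rw [e, eq_comm, show ∀ A B C D : ℂ, A * B / 2 * C * D = C * 2 * (A * B / 4 * D) by
    intros; ring, ← h, show (8 * Real.pi : ℂ) ^ m = 2 ^ m * (4 * Real.pi) ^ m by
    rw [← mul_pow]; congr 1; ring]
  field_simp
  ring

section BddMeas

variable {X : Type*} [MeasurableSpace X] {R S : X → ℂ}

/-- Measurable and bounded functions. -/
def BddMeas (R : X → ℂ) : Prop := Measurable R ∧ ∃ C, ∀ x, ‖R x‖ ≤ C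

lemma BddMeas.mul (hR : BddMeas R) (hS : BddMeas S) : BddMeas fun x => R x * S x := by
  obtain ⟨hR, C, hC⟩ := hR
  obtain ⟨hS, D, hD⟩ := hS
  refine ⟨hR.mul hS, C * D, fun x => ?_⟩
  rw [norm_mul]
  exact mul_le_mul (hC x) (hD x) (norm_nonneg _) ((norm_nonneg _).trans (hC x))

lemma BddMeas.const (z : ℂ) : BddMeas fun _ : X => z := ⟨measurable_const, ‖z‖, fun _ => le_rfl⟩

lemma BddMeas.prod {ι : Type*} (s : Finset ι) {R : ι → X → ℂ} (hR : ∀ i, BddMeas (R i)) :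
    BddMeas fun x => ∏ i ∈ s, R i x := by
  classical
  induction s using Finset.induction_on with
  | empty => simpa using BddMeas.const 1
  | insert i s hi ih =>
    simp only [Finset.prod_insert hi]
    exact (hR i).mul ih

lemma BddMeas.gammaR [TopologicalSpace X] [OpensMeasurableSpace X] {g : X → ℂ}
    (hg : Continuous g) {r : ℝ} (hr : 0 < r) (h : ∀ x, (g x).re = r) :
    BddMeas fun x => GammaR (g x) :=
  ⟨(continuous_GammaR_comp hg fun x => by rw [h]; exact hr).measurable, ‖GammaR r‖, fun x => by
    have := norm_GammaR_le (s := g x) (by rw [h]; exact hr)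
    rwa [h] at this⟩

lemma BddMeas.laplacePi_vertPt {m : ℕ} {f : (Fin m → ℝ) → ℂ} (hf : Measurable f) (d : Fin m → ℝ)
    {g : X → Fin m → ℝ} (hg : Measurable g) :
    BddMeas fun x => laplacePi f (vertPt d (g x)) :=
  ⟨(stronglyMeasurable_laplacePi hf d).measurable.comp hg, _,
    fun x => norm_laplacePi_le (vertPt_re d (g x))⟩

end BddMeas

lemma integrable_gammaR_shear {k m : ℕ} (e : Fin m → Fin k) {γ : Fin k → ℂ} {c : Fin k → ℝ}
    {d : Fin m → ℝ} (hγ : ∀ i, c i < (γ i).re) (hd : ∀ j, d j < c (e j))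
    {R : (Fin k → ℝ) × (Fin m → ℝ) → ℂ} (hR : BddMeas R) :
    Integrable (fun p => R p * ((∏ i, GammaR (γ i - vertPt c p.1 i)) *
      ∏ j, GammaR (vertPt c p.1 (e j) - vertPt d p.2 j))) (volume.prod volume) := by
  have h1 : Integrable fun u : Fin m → ℝ => ∏ j, GammaR ((c (e j) - d j : ℝ) + u j * I) :=
    Integrable.fintype_prod (f := fun j (t : ℝ) => GammaR ((c (e j) - d j : ℝ) + t * I))
      fun j => integrable_GammaR_vertical (sub_pos.2 (hd j))
  have hT : MeasurePreserving (fun p : (Fin k → ℝ) × (Fin m → ℝ) =>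
      (p.1, (fun j => p.1 (e j)) - p.2)) (volume.prod volume) (volume.prod volume) := by
    refine MeasurePreserving.skew_product (f := id) (g := fun (x : Fin k → ℝ) (y : Fin m → ℝ) =>
      (fun j => x (e j)) - y) (MeasurePreserving.id _) ?_ ?_
    · exact (by fun_prop : Continuous fun p : (Fin k → ℝ) × (Fin m → ℝ) =>
        (fun j => p.1 (e j)) - p.2).measurable
    · exact Filter.Eventually.of_forall fun x =>
        (Measure.measurePreserving_sub_left volume fun j => x (e j)).map_eq
  have h2 := hT.integrable_comp_of_integrable ((integrable_prod_GammaR_sub hγ).mul_prod h1)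
  obtain ⟨hm, C, hC⟩ := hR
  refine (h2.bdd_mul hm.aestronglyMeasurable (Filter.Eventually.of_forall hC)).congr
    (Filter.Eventually.of_forall fun p => ?_)
  simp only [Function.comp_apply]
  congr 3; ext j; congr 1
  simp [vertPt]; ring

/-- The right-hand side of Barnes' first lemma. -/
def barnesB (α β γ δ : ℂ) : ℂ :=
  GammaR (α + γ) * GammaR (α + δ) * GammaR (β + γ) * GammaR (β + δ) / GammaR (α + β + γ + δ)

lemma prod_barnes {k : ℕ} {α β γ δ : Fin k → ℂ} {c : Fin k → ℝ} (hα : ∀ i, 0 < (α i).re + c i)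
    (hβ : ∀ i, 0 < (β i).re + c i) (hγ : ∀ i, c i < (γ i).re) (hδ : ∀ i, c i < (δ i).re) :
    ∫ ξ : Fin k → ℝ, ∏ i, (GammaR (α i + vertPt c ξ i) * GammaR (β i + vertPt c ξ i) *
        (GammaR (γ i - vertPt c ξ i) * GammaR (δ i - vertPt c ξ i))) =
      (4 * Real.pi : ℂ) ^ k * ∏ i, barnesB (α i) (β i) (γ i) (δ i) := by
  simp only [vertPt]
  rw [integral_fintype_prod_volume_eq_prod (fun i (t : ℝ) =>
    GammaR (α i + (c i + t * I)) * GammaR (β i + (c i + t * I)) *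
        (GammaR (γ i - (c i + t * I)) * GammaR (δ i - (c i + t * I)))),
    Finset.prod_congr rfl fun i _ => barnes_first_lemma (hα i) (hβ i) (hγ i) (hδ i),
    Finset.prod_mul_distrib]
  simp [barnesB]

/-- Append a last coordinate to a complex vector. -/
def snocC {m : ℕ} (z : Fin m → ℂ) (b : ℂ) : Fin (m + 1) → ℂ := Fin.snoc (α := fun _ => ℂ) z b

/-- Prepend `0` to a complex vector. -/
def consZ {m : ℕ} (z : Fin m → ℂ) : Fin (m + 1) → ℂ := Fin.cons (α := fun _ => ℂ) 0 z

section

variable {m : ℕ} (z : Fin m → ℂ) (b : ℂ)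

@[simp] lemma snocC_castSucc (j : Fin m) : snocC z b j.castSucc = z j := by simp [snocC]
@[simp] lemma snocC_last : snocC z b (Fin.last m) = b := by simp [snocC]
@[simp] lemma consZ_succ (j : Fin m) : consZ z j.succ = z j := by simp [consZ]
@[simp] lemma consZ_zero : consZ z 0 = 0 := by simp [consZ]

end

lemma continuous_snocC_vertPt {X : Type*} [TopologicalSpace X] {m : ℕ} (d : Fin m → ℝ) (b : ℂ)
    {g : X → Fin m → ℝ} (hg : Continuous g) (i : Fin (m + 1)) :
    Continuous fun x => snocC (vertPt d (g x)) b i := by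
  refine Fin.lastCases ?_ (fun j => ?_) i
  · simpa using continuous_const
  · simp only [snocC_castSucc]
    exact (continuous_apply j).comp ((continuous_vertPt d).comp hg)

lemma prod_gammaR_regroup {m : ℕ} (a₀ b : ℂ) (q : Fin (m + 1) → ℂ) (z : Fin m → ℂ) :
    GammaR (a₀ + q 0) * GammaR (b + q (Fin.last m)) *
        ∏ j : Fin m, (GammaR (q j.castSucc - z j) * GammaR (a₀ + q j.succ - z j)) =
      ∏ i, (GammaR (-snocC z (-b) i + q i) * GammaR (a₀ - consZ z i + q i)) := by
  rw [Finset.prod_mul_distrib, Finset.prod_mul_distrib,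
    Fin.prod_univ_castSucc fun i => GammaR (-snocC z (-b) i + q i),
    Fin.prod_univ_succ fun i => GammaR (a₀ - consZ z i + q i)]
  simp only [snocC_castSucc, snocC_last, consZ_succ, consZ_zero, neg_neg, sub_zero,
    neg_add_eq_sub, sub_add_eq_add_sub]
  ring

lemma prod_gammaR_regroup' {m : ℕ} (σ b : ℂ) (q z : Fin m → ℂ) :
    GammaR (consZ z (Fin.last m) + σ + b) *
        ∏ j : Fin m, GammaR (consZ z j.castSucc + σ - q j) =
      GammaR (σ - snocC q (-b) 0) * ∏ j : Fin m, GammaR (σ - snocC q (-b) j.succ + z j) := by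
  have h1 := Fin.prod_univ_castSucc fun i => GammaR (σ - snocC q (-b) i + consZ z i)
  have h2 := Fin.prod_univ_succ fun i => GammaR (σ - snocC q (-b) i + consZ z i)
  simp only [snocC_castSucc, snocC_last, consZ_succ, consZ_zero, add_zero] at h1 h2
  rw [← h2, h1, mul_comm]
  congr 2
  · ext j; congr 1; ring
  · ring

/-- First evaluation of the Barnes-type integral: expand the Mellin transform of the Whittaker
function by its recursion and integrate out the outer variables. -/
lemma integral_laplacePi_logWhitt_succ (m : ℕ) {a : ℕ → ℂ} (ha : ∀ j < m + 2, (a j).re = 0)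
    {γ δ : Fin (m + 1) → ℂ} {c : Fin (m + 1) → ℝ} {d : Fin m → ℝ} (hc : ∀ i, 0 < c i)
    (hd : ∀ j, 0 < d j) (hdc : ∀ j : Fin m, d j < c j.castSucc) (hdc' : ∀ j : Fin m, d j < c j.succ)
    (hγ : ∀ i, c i < (γ i).re) (hδ : ∀ i, c i < (δ i).re) :
    ∫ ξ, laplacePi (logWhitt (m + 1) a) (vertPt c ξ) *
        ∏ i, (GammaR (γ i - vertPt c ξ i) * GammaR (δ i - vertPt c ξ i)) =
      2 * Real.pi * ∫ η, laplacePi (logWhitt m fun j => a (j + 1)) (vertPt d η) *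
        ∏ i, barnesB (-snocC (vertPt d η) (-sumA (m + 1) fun j => a (j + 1)) i)
          (a 0 - consZ (vertPt d η) i) (γ i) (δ i) := by
  have ha' : ∀ j < m + 1, (a (j + 1)).re = 0 := fun j hj => ha _ (by omega)
  have hb := sumA_re ha'
  set b := sumA (m + 1) fun j => a (j + 1)
  set L := fun η => laplacePi (logWhitt m fun j => a (j + 1)) (vertPt d η) with hL
  have hF : Integrable (fun p : (Fin (m + 1) → ℝ) × (Fin m → ℝ) => L p.2 *
      ∏ i, (GammaR (-snocC (vertPt d p.2) (-b) i + vertPt c p.1 i) *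
        GammaR (a 0 - consZ (vertPt d p.2) i + vertPt c p.1 i) *
          (GammaR (γ i - vertPt c p.1 i) * GammaR (δ i - vertPt c p.1 i))))
      (volume.prod volume) := by
    have hR : BddMeas fun p : (Fin (m + 1) → ℝ) × (Fin m → ℝ) => L p.2 *
        (GammaR (a 0 + vertPt c p.1 0) * GammaR (b + vertPt c p.1 (Fin.last m))) *
        ((∏ j : Fin m, GammaR (a 0 + vertPt c p.1 j.succ - vertPt d p.2 j)) *
        ∏ i, GammaR (δ i - vertPt c p.1 i)) := by
      refine ((BddMeas.laplacePi_vertPt (measurable_logWhitt m _) d measurable_snd).mul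
        ((BddMeas.gammaR ?_ (hc 0) ?_).mul (BddMeas.gammaR ?_ (hc (Fin.last m)) ?_))).mul
        ((BddMeas.prod _ fun j => BddMeas.gammaR ?_ (sub_pos.2 (hdc' j)) ?_).mul
          (BddMeas.prod _ fun i => BddMeas.gammaR ?_ (sub_pos.2 (hδ i)) ?_))
      all_goals first
        | (unfold vertPt; fun_prop)
        | (intro p; simp [ha 0, hb])
    refine (integrable_gammaR_shear Fin.castSucc hγ hdc hR).congr
      (Filter.Eventually.of_forall fun p => ?_)
    have h := prod_gammaR_regroup (a 0) b (vertPt c p.1) (vertPt d p.2)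
    simp only
    rw [Finset.prod_mul_distrib (f := fun i => GammaR (-snocC (vertPt d p.2) (-b) i +
      vertPt c p.1 i) * GammaR (a 0 - consZ (vertPt d p.2) i + vertPt c p.1 i)), ← h]
    simp only [Finset.prod_mul_distrib]
    ring
  calc _ = ∫ ξ : Fin (m + 1) → ℝ, ((4 * Real.pi : ℂ) ^ m)⁻¹ / 2 * ∫ η, L η *
      ∏ i, (GammaR (-snocC (vertPt d η) (-b) i + vertPt c ξ i) *
        GammaR (a 0 - consZ (vertPt d η) i + vertPt c ξ i) *
          (GammaR (γ i - vertPt c ξ i) * GammaR (δ i - vertPt c ξ i))) := by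
        congr 1; ext ξ
        rw [laplacePi_logWhitt_succ m ha hd (by simpa using hc 0) (by simpa using hc (Fin.last m))
          (fun j => by simpa using hdc j) (fun j => by simpa using hdc' j)]
        rw [← integral_const_mul, ← integral_const_mul, mul_comm, ← integral_const_mul]
        congr 1; ext η
        rw [Finset.prod_mul_distrib (f := fun i => GammaR (-snocC (vertPt d η) (-b) i +
          vertPt c ξ i) * GammaR (a 0 - consZ (vertPt d η) i + vertPt c ξ i)),
          ← prod_gammaR_regroup]
        ring
    _ = ((4 * Real.pi : ℂ) ^ m)⁻¹ / 2 * ∫ η, ∫ ξ : Fin (m + 1) → ℝ, L η *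
      ∏ i, (GammaR (-snocC (vertPt d η) (-b) i + vertPt c ξ i) *
        GammaR (a 0 - consZ (vertPt d η) i + vertPt c ξ i) *
          (GammaR (γ i - vertPt c ξ i) * GammaR (δ i - vertPt c ξ i))) := by
        rw [integral_const_mul, integral_integral_swap hF]
    _ = _ := by
        rw [← integral_const_mul, ← integral_const_mul]
        congr 1; ext η
        rw [integral_const_mul, prod_barnes (fun i => ?_) (fun i => ?_) hγ hδ]
        · have hπ : (Real.pi : ℂ) ≠ 0 := by exact_mod_cast Real.pi_ne_zero
          field_simp
          ring
        · refine Fin.lastCases ?_ (fun j => ?_) i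
          · simpa [hb] using hc _
          · simpa using hdc j
        · refine Fin.cases ?_ (fun j => ?_) i
          · simpa [ha 0] using hc 0
          · simpa [ha 0] using hdc' j

/-- Second evaluation: substitute a Barnes-type self-reproducing formula into the recursion for
the Mellin transform of the Whittaker function and integrate out the recursion variables. -/
lemma laplacePi_logWhitt_succ_of_reproducing (m : ℕ) {a : ℕ → ℂ}
    (ha : ∀ j < m + 2, (a j).re = 0) {σ : ℂ} {p : Fin (m + 1) → ℂ} {ε ζ : ℝ} (hε : 0 < ε)
    (hεζ : ε < ζ) (hεσ : ε < σ.re) (hp : ∀ i, ζ < (p i).re) {K : ℂ}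
    (hK : ∀ η : Fin m → ℝ,
      K * laplacePi (logWhitt m fun j => a (j + 1)) (vertPt (fun _ => ζ) η) =
        GammaR (consZ (vertPt (fun _ => ζ) η) (Fin.last m) + σ +
            sumA (m + 1) fun j => a (j + 1)) * ((4 * Real.pi : ℂ) ^ m)⁻¹ *
          ∫ ξ, laplacePi (logWhitt m fun j => a (j + 1)) (vertPt (fun _ => ε) ξ) *
            ∏ j, (GammaR (vertPt (fun _ => ζ) η j - vertPt (fun _ => ε) ξ j) *
              GammaR (consZ (vertPt (fun _ => ζ) η) j.castSucc + σ -
                vertPt (fun _ => ε) ξ j))) :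
    K * laplacePi (logWhitt (m + 1) a) p =
      GammaR (a 0 + p 0) * GammaR (sumA (m + 1) (fun j => a (j + 1)) + p (Fin.last m)) / 2 *
        ((4 * Real.pi : ℂ) ^ m)⁻¹ *
        ∫ ξ, laplacePi (logWhitt m fun j => a (j + 1)) (vertPt (fun _ => ε) ξ) *
          (GammaR (σ - snocC (vertPt (fun _ => ε) ξ) (-sumA (m + 1) fun j => a (j + 1)) 0) *
          ∏ j : Fin m, barnesB (-vertPt (fun _ => ε) ξ j)
            (σ - snocC (vertPt (fun _ => ε) ξ) (-sumA (m + 1) fun j => a (j + 1)) j.succ)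
            (p j.castSucc) (a 0 + p j.succ)) := by
  have ha' : ∀ j < m + 1, (a (j + 1)).re = 0 := fun j hj => ha _ (by omega)
  have hb := sumA_re ha'
  have hζ : 0 < ζ := hε.trans hεζ
  rw [laplacePi_logWhitt_succ m ha (d := fun _ => ζ) (fun _ => hζ) (hζ.trans (hp _))
    (hζ.trans (hp _)) (fun j => hp _) fun j => hp _]
  set b := sumA (m + 1) fun j => a (j + 1)
  set L := fun ξ => laplacePi (logWhitt m fun j => a (j + 1)) (vertPt (fun _ : Fin m => ε) ξ)
    with hL
  have hS : ∀ (ξ : Fin m → ℝ) i, (snocC (vertPt (fun _ => ε) ξ) (-b) i).re ≤ ε := by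
    intro ξ i
    refine Fin.lastCases ?_ (fun j => ?_) i
    · simp [hb, hε.le]
    · simp
  have hF : Integrable (fun q : (Fin m → ℝ) × (Fin m → ℝ) => L q.2 *
      (GammaR (σ - snocC (vertPt (fun _ => ε) q.2) (-b) 0) *
      ∏ j : Fin m, (GammaR (-vertPt (fun _ => ε) q.2 j + vertPt (fun _ => ζ) q.1 j) *
        GammaR (σ - snocC (vertPt (fun _ => ε) q.2) (-b) j.succ + vertPt (fun _ => ζ) q.1 j) *
          (GammaR (p j.castSucc - vertPt (fun _ => ζ) q.1 j) *
            GammaR (a 0 + p j.succ - vertPt (fun _ => ζ) q.1 j)))))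
      (volume.prod volume) := by
    have hS' : ∀ i : Fin (m + 1), ∃ r ≤ ε, ∀ ξ : Fin m → ℝ,
        (snocC (vertPt (fun _ => ε) ξ) (-b) i).re = r := by
      intro i
      refine Fin.lastCases ⟨0, hε.le, fun ξ => by simp [hb]⟩ (fun j => ⟨ε, le_rfl, by simp⟩) i
    choose r hr hrS using hS'
    have hR : BddMeas fun q : (Fin m → ℝ) × (Fin m → ℝ) => L q.2 *
        GammaR (σ - snocC (vertPt (fun _ => ε) q.2) (-b) 0) *
        ((∏ j : Fin m, GammaR (σ - snocC (vertPt (fun _ => ε) q.2) (-b) j.succ +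
          vertPt (fun _ => ζ) q.1 j)) *
        ∏ j : Fin m, GammaR (a 0 + p j.succ - vertPt (fun _ => ζ) q.1 j)) := by
      refine ((BddMeas.laplacePi_vertPt (measurable_logWhitt m _) _ measurable_snd).mul
        (BddMeas.gammaR ?_ (r := σ.re - r 0) (by linarith [hr 0]) ?_)).mul
        ((BddMeas.prod _ fun j => BddMeas.gammaR ?_ (r := σ.re - r j.succ + ζ)
          (by linarith [hr j.succ]) ?_).mul
        (BddMeas.prod _ fun j => BddMeas.gammaR ?_ (r := (p j.succ).re - ζ)
          (by linarith [hp j.succ]) ?_))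
      · exact continuous_const.sub (continuous_snocC_vertPt _ _ continuous_snd _)
      · intro q; simp [hrS]
      · refine (continuous_const.sub (continuous_snocC_vertPt _ _ continuous_snd _)).add ?_
        unfold vertPt; fun_prop
      · intro q; simp [hrS]
      · unfold vertPt; fun_prop
      · intro q; simp [ha 0]
    refine (integrable_gammaR_shear (d := fun _ : Fin m => ε) (c := fun _ => ζ) id
      (γ := fun j => p j.castSucc) (fun j => hp _) (fun _ => hεζ) hR).congr
      (Filter.Eventually.of_forall fun q => ?_)
    simp only [Finset.prod_mul_distrib, id, neg_add_eq_sub]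
    ring
  calc _ = GammaR (a 0 + p 0) * GammaR (b + p (Fin.last m)) / 2 * ((4 * Real.pi : ℂ) ^ m)⁻¹ *
      ((4 * Real.pi : ℂ) ^ m)⁻¹ * ∫ η : Fin m → ℝ, ∫ ξ, L ξ *
      (GammaR (σ - snocC (vertPt (fun _ => ε) ξ) (-b) 0) *
      ∏ j : Fin m, (GammaR (-vertPt (fun _ => ε) ξ j + vertPt (fun _ => ζ) η j) *
        GammaR (σ - snocC (vertPt (fun _ => ε) ξ) (-b) j.succ + vertPt (fun _ => ζ) η j) *
          (GammaR (p j.castSucc - vertPt (fun _ => ζ) η j) *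
            GammaR (a 0 + p j.succ - vertPt (fun _ => ζ) η j)))) := by
        rw [mul_left_comm, mul_assoc (_ / 2 * _), ← integral_const_mul K,
          ← integral_const_mul ((4 * Real.pi : ℂ) ^ m)⁻¹]
        congr 1; congr 1; ext η
        rw [← mul_assoc, hK, show ∀ A B C D : ℂ, A * B * C * D = B * ((A * D) * C) by
          intros; ring, ← integral_const_mul (_ * _)]
        congr 1; congr 1; ext ξ
        have h := prod_gammaR_regroup' σ b (vertPt (fun _ => ε) ξ) (vertPt (fun _ => ζ) η)
        simp only [Finset.prod_mul_distrib, neg_add_eq_sub]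
        linear_combination (L ξ * (∏ j : Fin m, GammaR (vertPt (fun _ => ζ) η j -
          vertPt (fun _ => ε) ξ j)) * (∏ j : Fin m, GammaR (p j.castSucc -
          vertPt (fun _ => ζ) η j)) * ∏ j : Fin m, GammaR (a 0 + p j.succ -
          vertPt (fun _ => ζ) η j)) * h
    _ = _ := by
        rw [integral_integral_swap hF, mul_assoc, ← integral_const_mul]
        congr 1; congr 1; ext ξ
        rw [integral_const_mul, integral_const_mul, prod_barnes (fun j => ?_) (fun j => ?_)
          (fun j => hp _) fun j => ?_]
        · have hπ : (Real.pi : ℂ) ≠ 0 := by exact_mod_cast Real.pi_ne_zero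
          simp only [hL]
          field_simp
        · simpa using hεζ
        · have := hS ξ j.succ
          simp only [Complex.sub_re]; linarith
        · simpa [ha 0] using hp j.succ

lemma barnesB_eq {α β γ δ x₁ x₂ x₃ x₄ x₅ : ℂ} (h₁ : α + γ = x₁) (h₂ : α + δ = x₂)
    (h₃ : β + γ = x₃) (h₄ : β + δ = x₄) (h₅ : α + β + γ + δ = x₅) :
    barnesB α β γ δ = GammaR x₁ * GammaR x₂ * GammaR x₃ * GammaR x₄ / GammaR x₅ := by
  subst h₁ h₂ h₃ h₄ h₅; rfl

lemma prod_barnesB_eq {m : ℕ} {a₀ b σ : ℂ} (p : Fin (m + 1) → ℂ) (q : Fin m → ℂ)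
    (h0 : GammaR (p 0 + σ + a₀ - snocC q (-b) 0) ≠ 0) :
    GammaR (σ + a₀) * (GammaR (a₀ + p 0) * GammaR (b + p (Fin.last m)) *
      (GammaR (σ - snocC q (-b) 0) * ∏ j : Fin m, barnesB (-q j) (σ - snocC q (-b) j.succ)
        (p j.castSucc) (a₀ + p j.succ))) =
    GammaR (p (Fin.last m) + σ + (a₀ + b)) * ∏ i, barnesB (-snocC q (-b) i) (a₀ - consZ q i)
        (p i) (consZ p i.castSucc + σ) := by
  have h1 := Fin.prod_univ_castSucc fun i => GammaR (p i - snocC q (-b) i)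
  have h2 := Fin.prod_univ_succ fun i => GammaR (consZ p i.castSucc + σ - snocC q (-b) i)
  have h3 := Fin.prod_univ_succ fun i => GammaR (p i + a₀ - consZ q i)
  have h4 := Fin.prod_univ_succ fun i : Fin (m + 1) =>
    GammaR (consZ p i.castSucc + σ + a₀ - consZ q i)
  have h5 := Fin.prod_univ_succ fun i : Fin (m + 1) =>
    GammaR (p i + consZ p i.castSucc + σ + a₀ - snocC q (-b) i - consZ q i)
  have h6 := Fin.prod_univ_castSucc fun i => GammaR (p i + σ + a₀ - snocC q (-b) i)
  have h7 := Fin.prod_univ_succ fun i => GammaR (p i + σ + a₀ - snocC q (-b) i)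
  simp only [snocC_castSucc, snocC_last, consZ_succ, consZ_zero, Fin.castSucc_zero,
    ← Fin.succ_castSucc, zero_add, sub_zero, add_zero, sub_neg_eq_add] at h1 h2 h3 h4 h5 h6 h7
  have hA : ∏ i, barnesB (-snocC q (-b) i) (a₀ - consZ q i) (p i) (consZ p i.castSucc + σ) =
      (∏ i, GammaR (p i - snocC q (-b) i)) *
      (∏ i : Fin (m + 1), GammaR (consZ p i.castSucc + σ - snocC q (-b) i)) *
      (∏ i, GammaR (p i + a₀ - consZ q i)) *
      (∏ i : Fin (m + 1), GammaR (consZ p i.castSucc + σ + a₀ - consZ q i)) /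
      ∏ i : Fin (m + 1),
        GammaR (p i + consZ p i.castSucc + σ + a₀ - snocC q (-b) i - consZ q i) := by
    simp only [← Finset.prod_mul_distrib, ← Finset.prod_div_distrib]
    refine Finset.prod_congr rfl fun i _ => barnesB_eq ?_ ?_ ?_ ?_ ?_ <;> ring
  have hB : ∏ j : Fin m, barnesB (-q j) (σ - snocC q (-b) j.succ)
        (p j.castSucc) (a₀ + p j.succ) =
      (∏ j : Fin m, GammaR (p j.castSucc - q j)) *
      (∏ j : Fin m, GammaR (p j.succ + a₀ - q j)) *
      (∏ j : Fin m, GammaR (p j.castSucc + σ - snocC q (-b) j.succ)) *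
      (∏ j : Fin m, GammaR (p j.succ + σ + a₀ - snocC q (-b) j.succ)) /
      ∏ j : Fin m,
        GammaR (p j.succ + p j.castSucc + σ + a₀ - snocC q (-b) j.succ - q j) := by
    simp only [← Finset.prod_mul_distrib, ← Finset.prod_div_distrib]
    refine Finset.prod_congr rfl fun i _ => barnesB_eq ?_ ?_ ?_ ?_ ?_ <;> ring
  rw [h7] at h6
  rw [hA, hB, h1, h2, h3, h4, h5, add_comm a₀ (p 0), add_comm b (p _), ← add_assoc (_ + σ)]
  field_simp
  linear_combination (GammaR (σ + a₀) * GammaR (p 0 + a₀) * GammaR (p (Fin.last m) + b) *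
    GammaR (σ - snocC q (-b) 0) * (∏ j : Fin m, GammaR (p j.castSucc - q j)) *
    (∏ j : Fin m, GammaR (p j.succ + a₀ - q j)) *
    (∏ j : Fin m, GammaR (p j.castSucc + σ - snocC q (-b) j.succ)) *
    (∏ j : Fin m, GammaR (p j.succ + p j.castSucc + σ + a₀ - snocC q (-b) j.succ - q j))⁻¹) * h6

/-- Barnes-type self-reproducing formula for the Mellin transform of the Whittaker function. -/
lemma prod_gammaR_mul_laplacePi_logWhitt (m : ℕ) {a : ℕ → ℂ} (ha : ∀ j < m + 1, (a j).re = 0)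
    {σ : ℂ} {p : Fin m → ℂ} {c : Fin m → ℝ} (hc : ∀ j, 0 < c j)
    (hcp : ∀ j, c j < (p j).re) (hcσ : ∀ j : Fin m, c j < (consZ p j.castSucc + σ).re) :
    (∏ j ∈ Finset.range (m + 1), GammaR (σ + a j)) * laplacePi (logWhitt m a) p =
      GammaR (consZ p (Fin.last m) + σ + sumA (m + 1) a) * ((4 * Real.pi : ℂ) ^ m)⁻¹ *
        ∫ ξ, laplacePi (logWhitt m a) (vertPt c ξ) *
          ∏ j, (GammaR (p j - vertPt c ξ j) *
            GammaR (consZ p j.castSucc + σ - vertPt c ξ j)) := by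
  induction m generalizing a with
  | zero =>
    have h : ∀ ξ, vertPt c ξ = p := fun ξ => Subsingleton.elim _ _
    simp only [h]
    rw [Measure.volume_pi_eq_dirac 0, integral_dirac]
    simp [sumA, consZ]
  | succ m ih =>
    obtain ⟨ζ, hζ, hζc⟩ := exists_pos_lt hc
    have hσζ : ζ < σ.re := by
      have h1 := hcσ 0
      simp only [Fin.castSucc_zero, consZ_zero, zero_add] at h1
      exact (hζc 0).trans h1
    have hε : 0 < ζ / 2 := by linarith
    have hεζ : ζ / 2 < ζ := by linarith
    have ha' : ∀ j < m + 1, (a (j + 1)).re = 0 := fun j hj => ha _ (by omega)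
    have hL := laplacePi_logWhitt_succ_of_reproducing m ha (p := p) hε hεζ (hεζ.trans hσζ)
      (fun i => (hζc i).trans (hcp i)) fun η => ih ha' (p := vertPt (fun _ => ζ) η)
        (c := fun _ => ζ / 2) (fun _ => hε) (fun j => by simpa using hεζ) fun j => by
          obtain - | m := m
          · exact j.elim0
          · refine Fin.cases ?_ (fun k => ?_) j
            · simpa using hεζ.trans hσζ
            · rw [← Fin.succ_castSucc]; simp; linarith
    have hR := integral_laplacePi_logWhitt_succ m ha (γ := p)
      (δ := fun j => consZ p j.castSucc + σ) (d := fun _ => ζ / 2) hc (fun _ => hε)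
      (fun j => hεζ.trans (hζc _)) (fun j => hεζ.trans (hζc _)) hcp hcσ
    rw [hR, Finset.prod_range_succ', mul_comm _ (GammaR (σ + a 0)), mul_assoc, hL]
    have hs : sumA (m + 2) a = a 0 + sumA (m + 1) fun j => a (j + 1) := by
      rw [sumA, Finset.sum_range_succ', add_comm]; rfl
    rw [hs, ← Fin.succ_last, consZ_succ]
    have hπ : (Real.pi : ℂ) ≠ 0 := by exact_mod_cast Real.pi_ne_zero
    rw [show ∀ A B C D : ℂ, A * (B / 2 * C * D) = C / 2 * (A * B * D) by intros; ring,
      ← integral_const_mul (_ * _), show ∀ A D : ℂ, A * ((4 * Real.pi : ℂ) ^ (m + 1))⁻¹ *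
        (2 * Real.pi * D) = ((4 * Real.pi : ℂ) ^ m)⁻¹ / 2 * (A * D) by
        intros; field_simp; ring, ← integral_const_mul (GammaR _)]
    congr 2; ext ξ
    have hS : (snocC (vertPt (fun _ : Fin m => ζ / 2) ξ)
        (-sumA (m + 1) fun j => a (j + 1)) 0).re < (p 0).re := by
      have h1 := (hζc 0).trans (hcp 0)
      obtain - | m := m
      · rw [show (0 : Fin 1) = Fin.last 0 from rfl, snocC_last]
        simp only [Complex.neg_re, sumA_re ha', neg_zero]
        exact hζ.trans h1
      · rw [← Fin.castSucc_zero, snocC_castSucc, vertPt_re]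
        exact hεζ.trans h1
    have key := prod_barnesB_eq (a₀ := a 0) (b := sumA (m + 1) fun j => a (j + 1)) (σ := σ) p
      (vertPt (fun _ : Fin m => ζ / 2) ξ) (GammaR_ne_zero (by
        simp only [Complex.sub_re, Complex.add_re, ha 0 (by omega)]; linarith))
    linear_combination (laplacePi (logWhitt m fun j => a (j + 1))
      (vertPt (fun _ : Fin m => ζ / 2) ξ)) * key

lemma integral_posSet (k : ℕ) (F : (Fin k → ℝ) → ℂ) :
    ∫ t in posSet k, F t =
      ∫ x : Fin k → ℝ, (∏ j, (Real.exp (x j) : ℂ)) * F fun j => Real.exp (x j) := by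
  have hf : ∀ x ∈ Set.univ, HasFDerivWithinAt (fun (x : Fin k → ℝ) (j : Fin k) => Real.exp (x j))
      (ContinuousLinearMap.pi fun j => (Real.exp (x j) • ContinuousLinearMap.id ℝ ℝ).comp
        (ContinuousLinearMap.proj (R := ℝ) (φ := fun _ : Fin k => ℝ) j)) Set.univ x := by
    intro x _
    rw [hasFDerivWithinAt_univ]
    refine hasFDerivAt_pi.2 fun j => ?_
    have h := ((Real.hasDerivAt_exp (x j)).hasFDerivAt).comp x
      (ContinuousLinearMap.proj (R := ℝ) (φ := fun _ : Fin k => ℝ) j).hasFDerivAt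
    refine h.congr_fderiv ?_
    ext v; simp [mul_comm]
  have hinj : Set.InjOn (fun (x : Fin k → ℝ) (j : Fin k) => Real.exp (x j)) Set.univ :=
    fun x _ y _ h => funext fun j => Real.exp_injective (congrFun h j)
  have himg : (fun (x : Fin k → ℝ) (j : Fin k) => Real.exp (x j)) '' Set.univ = posSet k := by
    ext t
    simp only [Set.image_univ, Set.mem_range, posSet, Set.mem_ofPred_eq]
    refine ⟨?_, fun h => ⟨fun j => Real.log (t j), funext fun j => Real.exp_log (h j)⟩⟩
    rintro ⟨x, rfl⟩ j
    exact Real.exp_pos _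
  rw [← himg, integral_image_eq_integral_abs_det_fderiv_smul volume MeasurableSet.univ hf hinj,
    setIntegral_univ]
  congr 1; ext x
  rw [ContinuousLinearMap.det_pi, abs_of_pos]
  · simp [Complex.real_smul]
  · simp [Finset.prod_pos, Real.exp_pos]

lemma ofReal_exp_cpow (r : ℝ) (s : ℂ) : ((Real.exp r : ℝ) : ℂ) ^ s = cexp (s * r) := by
  rw [Complex.cpow_def_of_ne_zero (by exact_mod_cast (Real.exp_pos r).ne'),
    ← Complex.ofReal_log (Real.exp_pos r).le, Real.log_exp, mul_comm]

lemma extR_val {k : ℕ} (t : Fin k → ℝ) (j : Fin k) : extR t j = t j := by simp [extR]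

lemma extR_castSucc {k : ℕ} (t : Fin (k + 1) → ℝ) (j : Fin k) :
    extR t j = t j.castSucc := by
  have := j.2
  simp [extR, show (j : ℕ) < k + 1 by omega]; rfl

lemma extR_succ {k : ℕ} (t : Fin (k + 1) → ℝ) (j : Fin k) :
    extR t (j + 1) = t j.succ := by simp [extR]; rfl

lemma extR_last {k : ℕ} (t : Fin (k + 1) → ℝ) : extR t k = t (Fin.last k) := by simp [extR]; rfl

/-- Abel summation for the shear in the Whittaker recursion. -/
lemma sum_shear {m : ℕ} (w x : Fin (m + 1) → ℂ) :
    ∑ j : Fin m, ((j : ℂ) + 1) * (w j.castSucc + (x j.succ - w j.succ)) =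
      ∑ j : Fin (m + 1), ((j : ℂ) * x j + w j) - (m + 1) * w (Fin.last m) := by
  have h1 := Fin.sum_univ_castSucc fun j : Fin (m + 1) => ((j : ℂ) + 1) * w j
  have h2 := Fin.sum_univ_succ fun j : Fin (m + 1) => (j : ℂ) * (x j - w j)
  simp only [Fin.val_castSucc, Fin.val_last, Fin.val_zero, Fin.val_succ, Nat.cast_zero, zero_mul,
    Nat.cast_add, Nat.cast_one, mul_sub, mul_add, add_mul, one_mul,
    Finset.sum_add_distrib, Finset.sum_sub_distrib] at h1 h2 ⊢
  linear_combination -h1 - h2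

lemma prod_gaussTwist {m : ℕ} (α : Fin m → ℂ) (x : Fin m → ℝ) :
    ∏ j, gaussTwist (α j) (x j) = (∏ j, (gaussExp (x j) : ℂ)) * cexp (∑ j, α j * x j) := by
  simp only [gaussTwist, Finset.prod_mul_distrib, Complex.exp_sum]

lemma sum_lastExp_mul {m : ℕ} (b : ℂ) (w : Fin (m + 1) → ℝ) :
    ∑ j, lastExp m b j * w j = b * w (Fin.last m) := by
  simp [Fin.sum_univ_castSucc]

lemma shearKernel_lastExp {m : ℕ} (f : (Fin m → ℝ) → ℂ) (b a₀ : ℂ) (w x : Fin (m + 1) → ℝ) :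
    shearKernel f (lastExp m b) (fun _ => a₀) w (x - w) =
      f (fun j => w j.castSucc + (x j.succ - w j.succ)) *
      ((∏ j, (gaussExp (w j) : ℂ)) * ∏ j, (gaussExp (x j - w j) : ℂ)) *
        cexp (b * w (Fin.last m) + ∑ j, a₀ * (x j - w j)) := by
  have h1 := prod_gaussTwist (lastExp m b) w
  have h2 := prod_gaussTwist (fun _ => a₀) (x - w)
  rw [sum_lastExp_mul] at h1
  simp only [Pi.sub_apply, Complex.ofReal_sub] at h2
  simp only [shearKernel, Pi.sub_apply]
  rw [h1, h2, Complex.exp_add]; ring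

lemma logWhitt_add_const (m : ℕ) (a : ℕ → ℂ) (c : ℂ) (x : Fin m → ℝ) :
    logWhitt m (fun j => a j + c) x = cexp (c * ∑ j : Fin m, ((j : ℂ) + 1) * x j) *
      logWhitt m a x := by
  induction m generalizing a with
  | zero => simp [logWhitt]
  | succ m ih =>
    have ih' : logWhitt m (fun j => a (j + 1) + c) = fun u =>
        cexp (c * ∑ j : Fin m, ((j : ℂ) + 1) * u j) * logWhitt m (fun j => a (j + 1)) u :=
      funext fun u => ih (fun j => a (j + 1)) u
    rw [logWhitt, logWhitt, ih', mul_left_comm, ← integral_const_mul (cexp _)]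
    congr 2; ext w
    have hs : sumA (m + 1) (fun j => a (j + 1) + c) =
        sumA (m + 1) (fun j => a (j + 1)) + (m + 1) * c := by
      simp [sumA, Finset.sum_add_distrib]
    have key := sum_shear (fun j => (w j : ℂ)) fun j => (x j : ℂ)
    rw [shearKernel_lastExp, shearKernel_lastExp, hs]
    push_cast
    rw [key]
    generalize logWhitt m _ _ = L
    rw [show ∀ A B C : ℂ, A * L * B * C = (A * C) * (L * B) by intros; ring,
      show ∀ A B C : ℂ, A * (L * B * C) = (A * C) * (L * B) by intros; ring,
      ← Complex.exp_add, ← Complex.exp_add]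
    congr 2
    simp only [add_mul, mul_sub, mul_add, one_mul, Finset.sum_add_distrib,
      Finset.sum_sub_distrib, Finset.mul_sum]
    ring

lemma integral_eq_two_pow_mul_integral (k : ℕ) (g : (Fin k → ℝ) → ℂ) (c : ℝ) :
    ∫ τ, g τ = 2 ^ k * ∫ w : Fin k → ℝ, g fun j => -2 * w j - c := by
  have h1 := Measure.integral_comp_smul (volume : Measure (Fin k → ℝ))
    (fun v => g (v - fun _ => c)) (-2 : ℝ)
  rw [integral_sub_right_eq_self g fun _ => c, Module.finrank_fin_fun, abs_inv, abs_pow, abs_neg,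
    abs_two, Complex.real_smul] at h1
  have h2 : ∫ w : Fin k → ℝ, g (fun j => -2 * w j - c) = ((2 ^ k : ℝ)⁻¹ : ℝ) * ∫ τ, g τ := h1
  rw [h2, ← mul_assoc]
  push_cast
  rw [mul_inv_cancel₀ (pow_ne_zero _ two_ne_zero), one_mul]

lemma whittAr_two (a : ℕ → ℂ) {y : ℕ → ℝ} (hy : 0 < y 0) :
    WhittAr 2 a y = logWhitt 1 a fun _ => Real.log (y 0) := by
  obtain ⟨x, hx⟩ : ∃ x, y 0 = Real.exp x := ⟨_, (Real.exp_log hy).symm⟩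
  rw [WhittAr, BesselK, hx, Real.log_exp, ofReal_exp_cpow, integral_Ioi_eq_integral_exp, logWhitt]
  have h1 := (volume_preserving_funUnique (Fin 1) ℝ).integral_comp' (g := fun t : ℝ =>
    shearKernel (logWhitt 0 fun j => a (j + 1)) (lastExp 0 (sumA 1 fun j => a (j + 1)))
      (fun _ => a 0) (fun _ => t) ((fun _ => x) - fun _ => t))
  have h2 : ∫ w : Fin 1 → ℝ, shearKernel (logWhitt 0 fun j => a (j + 1))
      (lastExp 0 (sumA 1 fun j => a (j + 1))) (fun _ => a 0) w ((fun _ => x) - w) =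
      ∫ t : ℝ, shearKernel (logWhitt 0 fun j => a (j + 1)) (lastExp 0 (sumA 1 fun j => a (j + 1)))
      (fun _ => a 0) (fun _ => t) ((fun _ => x) - fun _ => t) := by
    rw [← h1]
    congr 1
  have h3 := Measure.integral_comp_mul_left (fun v : ℝ => Real.exp (v + x) • (cexp (-(((2 *
    Real.pi * Real.exp x : ℝ) : ℂ) / 2) * (((Real.exp (v + x) : ℝ) : ℂ) +
      1 / ((Real.exp (v + x) : ℝ) : ℂ))) * ((Real.exp (v + x) : ℝ) : ℂ) ^ ((a 0 - a 1) / 2) /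
      ((Real.exp (v + x) : ℝ) : ℂ))) (-2)
  rw [integral_add_right_eq_self (fun v : ℝ => Real.exp v • (cexp (-(((2 *
    Real.pi * Real.exp x : ℝ) : ℂ) / 2) * (((Real.exp v : ℝ) : ℂ) +
      1 / ((Real.exp v : ℝ) : ℂ))) * ((Real.exp v : ℝ) : ℂ) ^ ((a 0 - a 1) / 2) /
      ((Real.exp v : ℝ) : ℂ))) x, abs_inv, abs_neg, abs_two, Complex.real_smul] at h3
  rw [h2, show (2 : ℂ) * cexp ((a 0 + a 1) / 2 * x) = 2 * cexp ((a 0 + a 1) / 2 * x) * 1 by ring,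
    show ∀ A J : ℂ, 2 * A * 1 * (1 / 2 * J) = 2 * (A * (((2⁻¹ : ℝ) : ℂ) * J)) by
      intros; push_cast; ring, ← h3, ← integral_const_mul, pow_one]
  congr 2; ext t
  rw [shearKernel_lastExp, Complex.real_smul, ofReal_exp_cpow]
  have hne : ((Real.exp (-2 * t + x) : ℝ) : ℂ) ≠ 0 := by exact_mod_cast (Real.exp_pos _).ne'
  rw [mul_div_cancel₀ _ hne]
  simp only [Fin.prod_univ_succ, Fin.sum_univ_succ, Fin.prod_univ_zero, Fin.sum_univ_zero, logWhitt,
    one_mul, mul_one, add_zero, gaussExp, sumA, Finset.sum_range_one]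
  push_cast
  simp only [← Complex.exp_add, one_div, ← Complex.exp_neg]
  have e1 : cexp (x : ℂ) * cexp (-2 * t + x) = cexp (2 * (x - t)) := by
    rw [← Complex.exp_add]; congr 1; ring
  have e2 : cexp (x : ℂ) * cexp (-(-2 * t + x)) = cexp (2 * t) := by
    rw [← Complex.exp_add]; congr 1; ring
  congr 1
  rw [← e1, ← e2]
  ring

lemma whittaker_factor (x w : ℝ) (e e' : ℂ) :
    cexp ((-(Real.pi * Real.exp x) ^ 2 * Real.exp (-2 * w - Real.log Real.pi) -
        1 / Real.exp (-2 * w - Real.log Real.pi) : ℝ) : ℂ) *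
      ((Real.pi * Real.exp x : ℝ) : ℂ) ^ e *
      ((Real.exp (-2 * w - Real.log Real.pi) : ℝ) : ℂ) ^ e' =
    gaussExp w * gaussExp (x - w) *
      cexp (e * (Real.log Real.pi + x) + e' * (-2 * w - Real.log Real.pi)) := by
  have h1 : -(Real.pi * Real.exp x) ^ 2 * Real.exp (-2 * w - Real.log Real.pi) -
      1 / Real.exp (-2 * w - Real.log Real.pi) =
      -(Real.pi * Real.exp (2 * w)) + -(Real.pi * Real.exp (2 * (x - w))) := by
    have hπ := Real.pi_pos
    rw [Real.exp_sub, Real.exp_log hπ, mul_sub, sub_eq_add_neg (2 * x), Real.exp_add,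
      show -2 * w = -(2 * w) by ring, Real.exp_neg, two_mul x, Real.exp_add]
    field_simp
    ring
  have h2 : Real.pi * Real.exp x = Real.exp (Real.log Real.pi + x) := by
    rw [Real.exp_add, Real.exp_log Real.pi_pos]
  rw [h1, h2, ofReal_exp_cpow, ofReal_exp_cpow, Complex.exp_add, gaussExp, gaussExp,
    ← Complex.ofReal_exp, Real.exp_add]
  push_cast
  ring

lemma whittaker_exponent (n : ℕ) (a₀ b l : ℂ) (x w : Fin (n + 2) → ℂ) :
    a₀ / (n + 2) * ∑ j : Fin (n + 1), ((j : ℂ) + 1) * (w j.castSucc + (x j.succ - w j.succ)) +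
      ∑ j : Fin (n + 2), (((n + 2 - j : ℕ) : ℂ) * a₀ / ((n + 2 : ℕ) : ℂ) * (l + x j) +
        ((n + 3 : ℕ) : ℂ) * a₀ / (2 * ((n + 2 : ℕ) : ℂ)) * (-2 * w j - l)) +
      -(a₀ + b) / 2 * (-2 * w (Fin.last (n + 1))) =
    b * w (Fin.last (n + 1)) + ∑ j, a₀ * (x j - w j) := by
  have hN : ((n : ℂ) + 2) ≠ 0 := by exact_mod_cast (n + 1).succ_ne_zero
  have hg : ∑ j : Fin (n + 2), (j : ℂ) = (n + 2) * (n + 1) / 2 := by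
    have := Finset.sum_range_id_mul_two (n + 2)
    rw [show n + 2 - 1 = n + 1 by omega] at this
    have h2 : (∑ j ∈ Finset.range (n + 2), (j : ℂ)) * 2 = (n + 2) * (n + 1) := by
      have h3 := congrArg (Nat.cast : ℕ → ℂ) this
      push_cast at h3
      exact h3
    rw [Finset.sum_range] at h2
    rw [← h2]; ring
  have hc : ∀ j : Fin (n + 2), ((n + 2 - j : ℕ) : ℂ) = n + 2 - j := fun j => by
    rw [Nat.cast_sub j.2.le]; push_cast; ring
  rw [sum_shear]
  simp only [hc]
  have : ∀ j : Fin (n + 2), ((n : ℂ) + 2 - j) * a₀ / ((n + 2 : ℕ) : ℂ) * (l + x j) +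
      ((n + 3 : ℕ) : ℂ) * a₀ / (2 * ((n + 2 : ℕ) : ℂ)) * (-2 * w j - l) =
      a₀ * (x j - w j) - a₀ / (n + 2) * (j * x j + w j) +
        (a₀ * l / 2 * (n + 1) / (n + 2) - a₀ * l / (n + 2) * j) := fun j => by
    push_cast
    field_simp
    ring
  simp only [this, Finset.sum_add_distrib, Finset.sum_sub_distrib, ← Finset.mul_sum, hg,
    Finset.sum_const, Finset.card_univ, Fintype.card_fin, nsmul_eq_mul]
  push_cast
  field_simp
  ring

lemma whittAr_eq_logWhitt : ∀ (m : ℕ) (a : ℕ → ℂ) {y : ℕ → ℝ} (_ : ∀ j < m, 0 < y j),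
    WhittAr (m + 1) a y = logWhitt m a fun j => Real.log (y j)
  | 0, _, _, _ => rfl
  | 1, a, y, hy => by
    rw [whittAr_two a (hy 0 one_pos)]
    congr 1; ext j; rw [Subsingleton.elim j 0]; rfl
  | n + 2, a, y, hy => by
    have ih : ∀ {y : ℕ → ℝ}, (∀ j < n + 1, 0 < y j) → WhittAr (n + 2) (tildeA (n + 3) a) y =
        logWhitt (n + 1) (tildeA (n + 3) a) fun j => Real.log (y j) :=
      whittAr_eq_logWhitt (n + 1) (tildeA (n + 3) a)
    set x : Fin (n + 2) → ℝ := fun j => Real.log (y j) with hx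
    have hyx : ∀ j : Fin (n + 2), y j = Real.exp (x j) := fun j => (Real.exp_log (hy j j.2)).symm
    rw [WhittAr, integral_posSet, integral_eq_two_pow_mul_integral _ _ (Real.log Real.pi),
      logWhitt]
    congr 2; ext w
    set t : Fin (n + 2) → ℝ := fun j => Real.exp (-2 * w j - Real.log Real.pi) with ht
    have htpos : ∀ j, 0 < t j := fun j => Real.exp_pos _
    have hY : ∀ j < n + 1, 0 < y (j + 1) * Real.sqrt (extR t (j + 1) / extR t j) := by
      intro j hj
      have h1 := extR_succ t ⟨j, hj⟩
      have h2 := extR_castSucc t ⟨j, hj⟩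
      simp only at h1 h2
      rw [h1, h2]
      exact mul_pos (hy _ (by omega)) (Real.sqrt_pos.2 (div_pos (htpos _) (htpos _)))
    rw [ih hY]
    have hlog : (fun j : Fin (n + 1) => Real.log (y (j + 1) *
        Real.sqrt (extR t (j + 1) / extR t j))) =
        fun j => w j.castSucc + (x j.succ - w j.succ) := by
      ext j
      have h3 := hyx j.succ
      rw [Fin.val_succ] at h3
      rw [extR_succ, extR_castSucc, h3, Real.log_mul (Real.exp_pos _).ne'
        (Real.sqrt_pos.2 (div_pos (htpos _) (htpos _))).ne', Real.log_sqrt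
        (div_pos (htpos _) (htpos _)).le, Real.log_div (htpos _).ne' (htpos _).ne']
      simp only [ht, Real.log_exp]; ring
    have htilde : tildeA (n + 3) a = fun j => a (j + 1) + a 0 / (n + 2) := by
      ext j; simp only [tildeA]; congr 2; push_cast; ring
    rw [hlog, htilde, logWhitt_add_const (n + 1) (fun j => a (j + 1)), shearKernel_lastExp]
    have hfac : ∀ j : Fin (n + 2),
        cexp (((-(Real.pi * y j) ^ 2 * extR t j - 1 / extR t j : ℝ) : ℂ)) *
          ((Real.pi * y j : ℝ) : ℂ) ^ ((((n + 2 - j : ℕ) : ℂ) * a 0) / ((n + 2 : ℕ) : ℂ)) *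
          ((extR t j : ℝ) : ℂ) ^ ((((n + 3 : ℕ) : ℂ) * a 0) / (2 * ((n + 2 : ℕ) : ℂ))) =
        gaussExp (w j) * gaussExp (x j - w j) * cexp (((n + 2 - j : ℕ) : ℂ) * a 0 /
          ((n + 2 : ℕ) : ℂ) * (Real.log Real.pi + x j) +
          ((n + 3 : ℕ) : ℂ) * a 0 / (2 * ((n + 2 : ℕ) : ℂ)) * (-2 * w j - Real.log Real.pi)) :=
      fun j => by rw [extR_val, hyx j]; exact whittaker_factor (x j) (w j) _ _
    have hlast : ((Real.pi * extR t (n + 1) : ℝ) : ℂ) ^ (-(sumA (n + 3) a) / 2) =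
        cexp (-(a 0 + sumA (n + 2) fun j => a (j + 1)) / 2 * (-2 * w (Fin.last (n + 1)))) := by
      have : Real.pi * extR t (n + 1) = Real.exp (-2 * w (Fin.last (n + 1))) := by
        rw [extR_last, ht]
        simp only
        rw [Real.exp_sub, Real.exp_log Real.pi_pos]
        field_simp
      rw [this, ofReal_exp_cpow, sumA, Finset.sum_range_succ', sumA]
      push_cast
      rw [add_comm (a 0)]
    have hinv : (∏ j : Fin (n + 2), ((Real.exp (-2 * w j - Real.log Real.pi) : ℝ) : ℂ)) *
        (∏ j ∈ Finset.range (n + 2), ((extR t j : ℝ) : ℂ))⁻¹ = 1 := by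
      rw [Finset.prod_range]
      simp only [extR_val]
      exact mul_inv_cancel₀ (Finset.prod_ne_zero_iff.2 fun j _ =>
        Complex.ofReal_ne_zero.2 (htpos j).ne')
    have hexp := whittaker_exponent n (a 0) (sumA (n + 2) fun j => a (j + 1)) (Real.log Real.pi)
      (fun j => x j) fun j => w j
    rw [Finset.prod_range (n := n + 2) (f := fun j =>
      cexp (((-(Real.pi * y j) ^ 2 * extR t j - 1 / extR t j : ℝ) : ℂ)) *
          ((Real.pi * y j : ℝ) : ℂ) ^ ((((n + 2 - j : ℕ) : ℂ) * a 0) / ((n + 2 : ℕ) : ℂ)) *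
          ((extR t j : ℝ) : ℂ) ^ ((((n + 3 : ℕ) : ℂ) * a 0) / (2 * ((n + 2 : ℕ) : ℂ)))),
      Finset.prod_congr rfl fun j _ => hfac j, hlast, ← hexp, Complex.exp_add, Complex.exp_add,
      Complex.exp_sum]
    simp only [Finset.prod_mul_distrib]
    push_cast at hinv ⊢
    generalize logWhitt (n + 1) _ _ = L
    rw [mul_left_comm, hinv]
    ring

lemma ufun_succ (m : ℕ) (a s : ℕ → ℂ) :
    Ufun (m + 1) a s = laplacePi (logWhitt m a) fun j => s j := by
  rw [Ufun, laplacePi]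
  change ∫ y in posSet m, _ * ∏ j ∈ Finset.range m, _ = _
  rw [integral_posSet]
  congr 1; ext x
  have hpos : ∀ j < m, 0 < extR (fun j => Real.exp (x j)) j := fun j hj => by
    rw [extR_val (fun j : Fin m => Real.exp (x j)) ⟨j, hj⟩]; exact Real.exp_pos _
  rw [whittAr_eq_logWhitt m a hpos, expSum_eq_prod, Finset.prod_range,
    mul_left_comm, ← Finset.prod_mul_distrib]
  simp only [extR_val, Real.log_exp, ofReal_exp_cpow]
  congr 1
  refine Finset.prod_congr rfl fun j _ => ?_
  exact mul_div_cancel₀ _ (Complex.ofReal_ne_zero.2 (Real.exp_pos _).ne')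

/-- Barnes-type self-reproducing identity for `U_{n,a}`
(Proposition 1.8(1) of Ishii–Stade). -/
theorem U_barnes_identity_one (n : ℕ) (hn : 2 ≤ n) (a : ℕ → ℂ)
    (ha : ∀ j < n, (a j).re = 0) (σ : ℂ) (hσ : 0 < σ.re)
    (p : ℕ → ℂ) (hp : ∀ j < n - 1, 0 < (p j).re)
    (c : ℕ → ℝ) (hc : ∀ i < n - 1, 0 < c i)
    (hΓ : ∀ j, 1 ≤ j → j ≤ n - 1 →
      0 < (Pext p j - (c (j - 1) : ℂ)).re ∧
      0 < (Pext p (j - 1) - (c (j - 1) : ℂ) + σ).re) :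
    Ufun n a p =
      GammaR (p (n - 2) + σ + sumA n a) / (∏ j ∈ Finset.range n, GammaR (σ + a j)) *
        (((4 * (Real.pi : ℂ) * Complex.I) ^ (n - 1))⁻¹ *
          VIntK (n - 1) c (fun q =>
            Ufun n a q *
              ∏ j ∈ Finset.Icc 1 (n - 1),
                GammaR (Pext p j - q (j - 1)) *
                  GammaR (Pext p (j - 1) - q (j - 1) + σ))) := by
  obtain ⟨k, rfl⟩ := Nat.exists_eq_add_of_le' hn
  change Ufun (k + 1 + 1) a p = GammaR (p k + σ + _) / _ * (((4 * (Real.pi : ℂ) * I) ^ (k + 1))⁻¹ *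
    VIntK (k + 1) c fun q => _ * ∏ j ∈ Finset.Icc 1 (k + 1), _)
  have hP : ∀ j : Fin (k + 1), Pext p j = consZ (fun i : Fin (k + 1) => p i) j.castSucc := by
    refine Fin.cases ?_ fun j => ?_
    · simp [Pext]
    · rw [← Fin.succ_castSucc, consZ_succ]; simp [Pext]
  have hP' : ∀ j : Fin (k + 1), Pext p (j + 1) = p j := fun j => by simp [Pext]
  have hΓ' := fun j : Fin (k + 1) => hΓ (j + 1) (by omega) (by have := j.2; omega)
  simp only [Nat.add_sub_cancel, hP', hP] at hΓ'
  have key := prod_gammaR_mul_laplacePi_logWhitt (k + 1) (a := a) ha (σ := σ)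
    (p := fun j => p j) (c := fun j => c j) (fun j => hc j j.2)
    (fun j => by have := (hΓ' j).1; simp at this; linarith)
    (fun j => by have := (hΓ' j).2; simp at this ⊢; linarith)
  have hne : ∏ j ∈ Finset.range (k + 2), GammaR (σ + a j) ≠ 0 := by
    refine Finset.prod_ne_zero_iff.2 fun j hj => ?_
    exact GammaR_ne_zero (by rw [add_re, ha j (Finset.mem_range.1 hj)]; simpa)
  have hlast : consZ (fun j : Fin (k + 1) => p j) (Fin.last (k + 1)) = p k := by
    rw [← Fin.succ_last, consZ_succ]; simp
  have hV : VIntK (k + 1) c (fun q => Ufun (k + 1 + 1) a q * ∏ j ∈ Finset.Icc 1 (k + 1),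
      GammaR (Pext p j - q (j - 1)) * GammaR (Pext p (j - 1) - q (j - 1) + σ)) =
      I ^ (k + 1) * ∫ ξ, laplacePi (logWhitt (k + 1) a) (vertPt (fun j => c j) ξ) *
        ∏ j : Fin (k + 1), (GammaR (p j - vertPt (fun j => c j) ξ j) *
          GammaR (consZ (fun j => p j) j.castSucc + σ - vertPt (fun j => c j) ξ j)) := by
    rw [VIntK]
    congr 2; ext ξ
    have h0 : ∀ j : Fin (k + 1), extR0 ξ j = ξ j := fun j => by simp [extR0, j.2]
    rw [ufun_succ, ← Finset.Ico_add_one_right_eq_Icc, Finset.prod_Ico_eq_prod_range,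
      Nat.add_sub_cancel, Finset.prod_range]
    simp only [h0, add_comm 1 (_ : ℕ), Nat.add_sub_cancel, hP, hP', vertPt, sub_add_eq_add_sub]
    rfl
  rw [hV, ufun_succ, ← mul_right_inj' hne, key, hlast, mul_pow _ I]
  field_simp

end
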